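/- arXiv:2104.07027 — 4 statements merged into one kernel-verified Lean document; each statement's English description precedes it below -/
import Mathlib

section
/- Let n ≥ 1, p ∈ (0,∞) with p ≠ 2, θ ∈ (−π, π], and let U ∈ Mₙ(ℂ) be unitary. Then the identity ‖U − (2P − I)‖_p^p = τ(P)·(2 − 2cos θ)^{p/2} + (1 − τ(P))·(2 + 2cos θ)^{p/2} holds for every projection P ∈ Mₙ(ℂ) if and only if U = e^{iθ}·I or U = e^{−iθ}·I. -/
open Matrix
open scoped ComplexOrder

/-- The normalized trace `L^p`-(quasi-)norm `(τ(|A|^p))^{1/p}` of a complex matrix,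
computed via the eigenvalues of `Aᴴ * A`: the eigenvalues of `|A|^p` are the
`(p/2)`-th powers of those of `Aᴴ * A`, and the trace of a Hermitian matrix is the
sum of its eigenvalues. -/
noncomputable def lpnorm {m : Type*} [Fintype m] [DecidableEq m] (p : ℝ)
    (A : Matrix m m ℂ) : ℝ :=
  ((∑ i, ((Matrix.posSemidef_conjTranspose_mul_self A).isHermitian.eigenvalues i) ^ (p / 2)) /
      (Fintype.card m : ℝ)) ^ (1 / p)

/-- The `ℓ² → ℓ²` operator norm of a complex matrix. -/
noncomputable def l2opNorm {m : Type*} [Fintype m] [DecidableEq m]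
    (A : Matrix m m ℂ) : ℝ :=
  ‖Matrix.toEuclideanCLM (𝕜 := ℂ) A‖

/-- For `q ≠ 1`, the function `x ↦ x ^ q` is nowhere additive on the positive reals. -/
theorem Real.add_rpow_ne_rpow_add {a b q : ℝ} (ha : 0 < a) (hb : 0 < b) (hq : q ≠ 1) :
    a ^ q + b ^ q ≠ (a + b) ^ q := by
  have hab : 0 < a + b := by positivity
  have hs : 0 < (a + b) ^ q := Real.rpow_pos_of_pos hab q
  have ha1 : a / (a + b) < 1 := by rw [div_lt_one hab]; linarith
  have hb1 : b / (a + b) < 1 := by rw [div_lt_one hab]; linarith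
  have hone : a / (a + b) + b / (a + b) = 1 := by field_simp
  intro h
  have h1 : (a / (a + b)) ^ q + (b / (a + b)) ^ q = 1 := by
    rw [Real.div_rpow ha.le hab.le, Real.div_rpow hb.le hab.le, ← add_div, h, div_self hs.ne']
  rcases hq.lt_or_gt with hq | hq <;>
  · have h2 := Real.rpow_lt_rpow_of_exponent_gt (div_pos ha hab) ha1 hq
    have h3 := Real.rpow_lt_rpow_of_exponent_gt (div_pos hb hab) hb1 hq
    rw [Real.rpow_one] at h2 h3
    linarith

/-- If two nonnegative families with constant pairwise sum `α + β` have `q`-th power means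
`α` and `β`, `q ≠ 1`, then both families are constant. -/
theorem eq_of_sum_rpow_eq_of_add_eq {ι : Type*} [Fintype ι] [Nonempty ι] {q α β : ℝ}
    (hq : 0 < q) (hq1 : q ≠ 1) (hα : 0 ≤ α) (hβ : 0 ≤ β) {a b : ι → ℝ}
    (ha : ∀ i, 0 ≤ a i) (hb : ∀ i, 0 ≤ b i) (hab : ∀ i, a i + b i = α + β)
    (hsa : (∑ i, a i ^ q) / Fintype.card ι = α ^ q)
    (hsb : (∑ i, b i ^ q) / Fintype.card ι = β ^ q) (i : ι) : a i = α := by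
  have hN : (0 : ℝ) < Fintype.card ι := by exact_mod_cast Fintype.card_pos
  set w : ι → ℝ := fun _ => (Fintype.card ι : ℝ)⁻¹ with hw
  have hw0 : ∀ i ∈ Finset.univ, 0 < w i := fun i _ => by simp only [hw]; positivity
  have hw1 : ∑ i, w i = 1 := by simp [hw]
  have hmean : ∀ f : ι → ℝ, ∑ i, w i • f i = (∑ i, f i) / Fintype.card ι := fun f => by
    simp only [hw, smul_eq_mul, ← Finset.mul_sum]; field_simp
  have hma : 0 ≤ ∑ i, w i • a i :=
    Finset.sum_nonneg fun i hi => mul_nonneg (hw0 i hi).le (ha i)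
  have hmb : 0 ≤ ∑ i, w i • b i :=
    Finset.sum_nonneg fun i hi => mul_nonneg (hw0 i hi).le (hb i)
  have hsum : ∑ i, w i • a i + ∑ i, w i • b i = α + β := by
    rw [← Finset.sum_add_distrib]
    simp only [← smul_add, hab, ← Finset.sum_smul, hw1, one_smul]
  have hsa' : ∑ i, w i • a i ^ q = α ^ q := by rw [hmean, hsa]
  have hsb' : ∑ i, w i • b i ^ q = β ^ q := by rw [hmean, hsb]
  rcases hq1.lt_or_gt with hq1 | hq1
  · have hf := Real.strictConcaveOn_rpow hq hq1
    have h1 := hf.concaveOn.le_map_sum (fun i hi => (hw0 i hi).le) hw1 (fun i _ => ha i)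
    have h2 := hf.concaveOn.le_map_sum (fun i hi => (hw0 i hi).le) hw1 (fun i _ => hb i)
    simp only [hsa', hsb'] at h1 h2
    rw [Real.rpow_le_rpow_iff hα hma hq] at h1
    rw [Real.rpow_le_rpow_iff hβ hmb hq] at h2
    have h3 : ∑ i, w i • a i = α := by linarith
    have := (hf.map_sum_eq_iff hw0 hw1 (fun i _ => ha i)).1 (by simp only [hsa', h3]) i
      (Finset.mem_univ i)
    rw [this, h3]
  · have hf := strictConvexOn_rpow hq1
    have h1 := hf.convexOn.map_sum_le (fun i hi => (hw0 i hi).le) hw1 (fun i _ => ha i)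
    have h2 := hf.convexOn.map_sum_le (fun i hi => (hw0 i hi).le) hw1 (fun i _ => hb i)
    simp only [hsa', hsb'] at h1 h2
    rw [Real.rpow_le_rpow_iff hma hα hq] at h1
    rw [Real.rpow_le_rpow_iff hmb hβ hq] at h2
    have h3 : ∑ i, w i • a i = α := by linarith
    have := (hf.map_sum_eq_iff hw0 hw1 (fun i _ => ha i)).1 (by simp only [hsa', h3]) i
      (Finset.mem_univ i)
    rw [this, h3]

namespace Matrix

variable {m : Type*} [DecidableEq m]

/-- The matrix supported on the rows and columns `j`, `k` with the given `2 × 2` block there. -/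
def twoBlock (j k : m) (a b c d : ℂ) : Matrix m m ℂ :=
  single j j a + single j k b + single k j c + single k k d

theorem twoBlock_add (j k : m) (a b c d a' b' c' d' : ℂ) :
    twoBlock j k a b c d + twoBlock j k a' b' c' d' =
      twoBlock j k (a + a') (b + b') (c + c') (d + d') := by
  simp only [twoBlock, single_add]
  abel

theorem smul_twoBlock (j k : m) (x a b c d : ℂ) :
    x • twoBlock j k a b c d = twoBlock j k (x * a) (x * b) (x * c) (x * d) := by
  simp only [twoBlock, smul_add, smul_single, smul_eq_mul]

theorem conjTranspose_twoBlock (j k : m) (a b c d : ℂ) :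
    (twoBlock j k a b c d)ᴴ = twoBlock j k (star a) (star c) (star b) (star d) := by
  simp only [twoBlock, conjTranspose_add, conjTranspose_single]
  abel

variable [Fintype m]

theorem twoBlock_mul {j k : m} (hjk : j ≠ k) (a b c d a' b' c' d' : ℂ) :
    twoBlock j k a b c d * twoBlock j k a' b' c' d' =
      twoBlock j k (a * a' + b * c') (a * b' + b * d') (c * a' + d * c') (c * b' + d * d') := by
  simp only [twoBlock, mul_add, add_mul, single_mul_single_same,
    single_add, ne_eq, hjk,
    hjk.symm, not_false_eq_true, single_mul_single_of_ne, add_zero, zero_add]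
  abel

theorem trace_twoBlock {j k : m} (hjk : j ≠ k) (a b c d : ℂ) :
    (twoBlock j k a b c d).trace = a + d := by
  simp [twoBlock, trace_add, trace_single_eq_of_ne _ _ _ hjk,
    trace_single_eq_of_ne _ _ _ hjk.symm]

theorem diagonal_mul_twoBlock (j k : m) (u : m → ℂ) (a b c d : ℂ) :
    diagonal u * twoBlock j k a b c d =
      twoBlock j k (u j * a) (u j * b) (u k * c) (u k * d) := by
  have h : ∀ (r s : m) (x : ℂ), diagonal u * single r s x = single r s (u r * x) := by
    intro r s x
    ext i l
    simp only [diagonal_mul, single_apply]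
    split_ifs with h
    · rw [h.1]
    · simp
  simp only [twoBlock, mul_add, h]

theorem twoBlock_mul_diagonal (j k : m) (u : m → ℂ) (a b c d : ℂ) :
    twoBlock j k a b c d * diagonal u =
      twoBlock j k (a * u j) (b * u k) (c * u j) (d * u k) := by
  have h : ∀ (r s : m) (x : ℂ), single r s x * diagonal u = single r s (x * u s) := by
    intro r s x
    ext i l
    simp only [mul_diagonal, single_apply]
    split_ifs with h
    · rw [h.2]
    · simp
  simp only [twoBlock, add_mul, h]

theorem twoBlock_conj_diagonalization {j k : m} (hjk : j ≠ k) {u : m → ℂ} {c : ℝ}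
    (hu : ∀ i, star (u i) * u i = 1) (huc : ∀ i, u i + star (u i) = 2 * c)
    (hujk : u j = star (u k)) :
    ∃ V W : Matrix m m ℂ, W * V = 1 ∧
      (diagonal u - ((2 : ℂ) • twoBlock j k (1 / 2) (1 / 2) (1 / 2) (1 / 2) - 1))ᴴ *
        (diagonal u - ((2 : ℂ) • twoBlock j k (1 / 2) (1 / 2) (1 / 2) (1 / 2) - 1)) =
      V * diagonal (fun i => ((if i = j then 4 else if i = k then 0 else 2 + 2 * c : ℝ) : ℂ)) *
        W := by
  have hw : star (u k) * u k = 1 := hu k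
  have hwc : u k + star (u k) = 2 * c := huc k
  have hD : (diagonal u)ᴴ * diagonal u = 1 := by
    rw [diagonal_conjTranspose, diagonal_mul_diagonal, ← diagonal_one]
    congr 1
    exact funext hu
  have hDc : diagonal u + (diagonal u)ᴴ = (2 * c : ℂ) • (1 : Matrix m m ℂ) := by
    rw [diagonal_conjTranspose, diagonal_add, smul_one_eq_diagonal]
    congr 1
    exact funext huc
  have hd : diagonal (fun i => ((if i = j then 4 else if i = k then 0 else 2 + 2 * c : ℝ) : ℂ)) =
      (2 + 2 * c : ℂ) • (1 : Matrix m m ℂ) + twoBlock j k (2 - 2 * c) 0 0 (-2 - 2 * c) := by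
    ext a b
    by_cases hab : a = b
    · subst hab
      by_cases haj : a = j
      · subst haj
        simp [twoBlock, hjk.symm]
        ring
      · by_cases hak : a = k
        · subst hak
          simp [twoBlock, hjk, hjk.symm]
        · simp [twoBlock, haj, hak, Ne.symm haj, Ne.symm hak]
    · have h1 : ∀ r (x : ℂ), single r r x a b = 0 := fun r x => by
        rw [single_apply, if_neg]
        rintro ⟨rfl, rfl⟩
        exact hab rfl
      simp [twoBlock, hab, h1]
  have hH : (diagonal u - ((2 : ℂ) • twoBlock j k (1 / 2) (1 / 2) (1 / 2) (1 / 2) - 1))ᴴ *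
        (diagonal u - ((2 : ℂ) • twoBlock j k (1 / 2) (1 / 2) (1 / 2) (1 / 2) - 1)) =
      (2 + 2 * c : ℂ) • (1 : Matrix m m ℂ) +
        twoBlock j k (-(2 * c)) (-(2 * u k)) (-(2 * star (u k))) (-(2 * c)) := by
    have hS : (2 : ℂ) • twoBlock j k (1 / 2) (1 / 2) (1 / 2) (1 / 2) = twoBlock j k 1 1 1 1 := by
      rw [smul_twoBlock]; norm_num
    have hSS : twoBlock j k 1 1 1 1 * twoBlock j k 1 1 1 1 =
        twoBlock j k 1 1 1 1 + twoBlock j k 1 1 1 1 := by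
      rw [twoBlock_mul hjk, twoBlock_add]; norm_num
    have hcross : (diagonal u)ᴴ * twoBlock j k 1 1 1 1 + twoBlock j k 1 1 1 1 * diagonal u =
        -twoBlock j k (-(2 * c)) (-(2 * u k)) (-(2 * star (u k))) (-(2 * c)) := by
      rw [diagonal_conjTranspose, diagonal_mul_twoBlock, twoBlock_mul_diagonal, twoBlock_add,
        ← neg_one_smul ℂ, smul_twoBlock]
      simp only [Pi.star_apply, hujk, star_star]
      congr 1
      · linear_combination hwc
      · ring
      · ring
      · linear_combination hwc
    rw [hS, conjTranspose_sub, conjTranspose_sub, conjTranspose_one, conjTranspose_twoBlock,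
      star_one]
    calc _ = (diagonal u)ᴴ * diagonal u + (diagonal u + (diagonal u)ᴴ) + 1
          - ((diagonal u)ᴴ * twoBlock j k 1 1 1 1 + twoBlock j k 1 1 1 1 * diagonal u)
          + (twoBlock j k 1 1 1 1 * twoBlock j k 1 1 1 1
            - (twoBlock j k 1 1 1 1 + twoBlock j k 1 1 1 1)) := by noncomm_ring
      _ = _ := by
        rw [hD, hDc, hcross, hSS]
        module
  have hVW : (1 + twoBlock j k (u k - 1) (u k) (-1) 0) *
      (1 + twoBlock j k (star (u k) / 2 - 1) (-1 / 2) (star (u k) / 2) (-1 / 2)) = 1 := by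
    simp only [mul_add, add_mul, mul_one, one_mul, twoBlock_mul hjk, add_assoc, twoBlock_add]
    have h0 : twoBlock j k 0 0 0 0 = 0 := by simp [twoBlock]
    rw [add_eq_left, ← h0]
    congr 1
    · linear_combination hw
    · ring
    · ring
    · ring
  refine ⟨1 + twoBlock j k (u k - 1) (u k) (-1) 0,
    1 + twoBlock j k (star (u k) / 2 - 1) (-1 / 2) (star (u k) / 2) (-1 / 2),
    mul_eq_one_comm.1 hVW, ?_⟩
  rw [hH, hd]
  set H : Matrix m m ℂ := (2 + 2 * c : ℂ) • (1 : Matrix m m ℂ) +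
    twoBlock j k (-(2 * c)) (-(2 * u k)) (-(2 * star (u k))) (-(2 * c)) with hHdef
  conv_lhs => rw [← mul_one H, ← hVW, ← mul_assoc]
  congr 1
  simp only [hHdef, mul_add, add_mul, mul_one, one_mul, smul_mul_assoc, mul_smul_comm,
    twoBlock_mul hjk, smul_add, smul_twoBlock, add_assoc, twoBlock_add]
  congr 2
  · ring
  · ring
  · linear_combination (-2) * hw
  · linear_combination (-2) * hw

theorem IsHermitian.exists_unitary_diagonal {A : Matrix m m ℂ} (hA : A.IsHermitian) :
    ∃ E : Matrix m m ℂ, E * Eᴴ = 1 ∧ Eᴴ * E = 1 ∧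
      A = E * diagonal (fun i => (hA.eigenvalues i : ℂ)) * Eᴴ :=
  ⟨hA.eigenvectorUnitary, Unitary.coe_mul_star_self _, Unitary.coe_star_mul_self _,
    hA.spectral_theorem⟩

theorem IsHermitian.map_eigenvalues_eq {A : Matrix m m ℂ} (hA : A.IsHermitian)
    {V W : Matrix m m ℂ} (hVW : W * V = 1) {d : m → ℝ}
    (h : A = V * diagonal (fun i => (d i : ℂ)) * W) :
    Finset.univ.val.map hA.eigenvalues = Finset.univ.val.map d := by
  have hc : A.charpoly = ∏ i, (Polynomial.X - Polynomial.C (d i : ℂ)) := by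
    rw [h, charpoly_mul_comm, ← mul_assoc, hVW, one_mul, charpoly_diagonal]
  have hr := hA.roots_charpoly_eq_eigenvalues
  rw [hc, Polynomial.roots_prod _ _ (Finset.prod_ne_zero_iff.2 fun i _ =>
    Polynomial.X_sub_C_ne_zero _)] at hr
  simp only [Polynomial.roots_X_sub_C, Multiset.bind_singleton] at hr
  apply Multiset.map_injective Complex.ofReal_injective
  rw [Multiset.map_map, Multiset.map_map]
  exact hr.symm

/-- A diagonalization of `Aᴴ * A` computes the `L^p` norm of `A`. -/
theorem lpnorm_rpow_of_diagonalization {p : ℝ} (hp : 0 < p) {A V W : Matrix m m ℂ}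
    (hVW : W * V = 1) {d : m → ℝ}
    (h : Aᴴ * A = V * diagonal (fun i => (d i : ℂ)) * W) :
    (∀ i, 0 ≤ d i) ∧ lpnorm p A ^ p = (∑ i, d i ^ (p / 2)) / Fintype.card m := by
  have hm := (posSemidef_conjTranspose_mul_self A).isHermitian.map_eigenvalues_eq hVW h
  have hd : ∀ i, 0 ≤ d i := fun i => by
    have hi : d i ∈ Finset.univ.val.map d := Multiset.mem_map_of_mem d (Finset.mem_univ i)
    rw [← hm, Multiset.mem_map] at hi
    obtain ⟨j, -, hj⟩ := hi
    exact hj ▸ (posSemidef_conjTranspose_mul_self A).eigenvalues_nonneg j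
  refine ⟨hd, ?_⟩
  have hs := congrArg (fun s => (s.map (fun x : ℝ => x ^ (p / 2))).sum) hm
  simp only [Multiset.map_map] at hs
  have hs' : ∑ i, (posSemidef_conjTranspose_mul_self A).isHermitian.eigenvalues i ^ (p / 2) =
    ∑ i, d i ^ (p / 2) := hs
  rw [lpnorm, hs', ← Real.rpow_mul, one_div, inv_mul_cancel₀ hp.ne', Real.rpow_one]
  exact div_nonneg (Finset.sum_nonneg fun i _ => Real.rpow_nonneg (hd i) _) (Nat.cast_nonneg _)

theorem smul_one_add_smul_conj {E : Matrix m m ℂ} (hE : E * Eᴴ = 1) (x y : ℂ) (d : m → ℂ) :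
    x • (1 : Matrix m m ℂ) + y • (E * diagonal d * Eᴴ) =
      E * diagonal (fun i => x + y * d i) * Eᴴ := by
  have h : diagonal (fun i => x + y * d i) = x • (1 : Matrix m m ℂ) + y • diagonal d := by
    rw [smul_one_eq_diagonal, ← diagonal_smul, diagonal_add]
    rfl
  rw [h, mul_add, add_mul, mul_smul_comm, mul_one, smul_mul_assoc, hE, mul_smul_comm,
    smul_mul_assoc]

theorem conj_conjTranspose_mul_conj {E : Matrix m m ℂ} (hE : Eᴴ * E = 1) (X : Matrix m m ℂ) :
    (E * X * Eᴴ)ᴴ * (E * X * Eᴴ) = E * (Xᴴ * X) * Eᴴ := by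
  rw [conjTranspose_mul, conjTranspose_mul, conjTranspose_conjTranspose]
  calc _ = E * (Xᴴ * (Eᴴ * E) * X) * Eᴴ := by simp only [mul_assoc]
    _ = _ := by rw [hE, mul_one]

/-- For a unimodular scalar `z`, the `L^p` distance of `z • 1` to a symmetry `2P - 1`. -/
theorem lpnorm_smul_one_sub_symmetry [Nonempty m] {p : ℝ} (hp : 0 < p) {z : ℂ}
    (hz : star z * z = 1) {P : Matrix m m ℂ} (hPs : Pᴴ = P) (hPP : P * P = P) :
    lpnorm p (z • (1 : Matrix m m ℂ) - ((2 : ℂ) • P - 1)) ^ p =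
      (P.trace.re / Fintype.card m) * (2 - 2 * z.re) ^ (p / 2) +
        (1 - P.trace.re / Fintype.card m) * (2 + 2 * z.re) ^ (p / 2) := by
  have hP : P.IsHermitian := hPs
  obtain ⟨E, hE, hE', hd⟩ := hP.exists_unitary_diagonal
  set y := hP.eigenvalues with hy
  have hzc : z + star z = 2 * z.re := by
    have := Complex.add_conj z
    push_cast at this
    exact this
  have hy01 : ∀ i, y i = 0 ∨ y i = 1 := by
    have h1 : Eᴴ * P * E = diagonal (fun i => (y i : ℂ)) := by
      rw [hd]
      calc _ = (Eᴴ * E) * diagonal (fun i => (y i : ℂ)) * (Eᴴ * E) := by simp only [mul_assoc]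
        _ = _ := by rw [hE', one_mul, mul_one]
    have h2 : diagonal (fun i => (y i : ℂ)) * diagonal (fun i => (y i : ℂ)) =
        diagonal (fun i => (y i : ℂ)) := by
      rw [← h1]
      calc _ = Eᴴ * (P * (E * Eᴴ) * P) * E := by simp only [mul_assoc]
        _ = _ := by rw [hE, mul_one, hPP]
    intro i
    rw [diagonal_mul_diagonal] at h2
    have h3 := congrFun (diagonal_injective h2) i
    have h4 : y i * y i = y i := by exact_mod_cast h3
    have h5 : y i * (y i - 1) = 0 := by linear_combination h4
    rcases mul_eq_zero.1 h5 with h | h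
    · exact Or.inl h
    · exact Or.inr (by linarith)
  have hH : (z • (1 : Matrix m m ℂ) - ((2 : ℂ) • P - 1))ᴴ *
      (z • (1 : Matrix m m ℂ) - ((2 : ℂ) • P - 1)) =
      E * diagonal (fun i => ((2 + 2 * z.re - 4 * z.re * y i : ℝ) : ℂ)) * Eᴴ := by
    have h1 : (fun i => ((2 + 2 * z.re - 4 * z.re * y i : ℝ) : ℂ)) =
        fun i => (2 + 2 * z.re : ℂ) + (-4 * z.re : ℂ) * (y i : ℂ) := by
      funext i
      push_cast
      ring
    rw [h1, ← smul_one_add_smul_conj hE, ← hd]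
    simp only [conjTranspose_sub, conjTranspose_smul, conjTranspose_one, hPs, mul_sub, sub_mul,
      smul_mul_assoc, mul_smul_comm, mul_one, one_mul, hPP, smul_smul, star_ofNat, smul_sub]
    have hzc' : star z = 2 * z.re - z := by linear_combination hzc
    rw [mul_comm z, hz, hzc']
    module
  rw [(lpnorm_rpow_of_diagonalization hp hE' hH).2]
  have hterm : ∀ i, (2 + 2 * z.re - 4 * z.re * y i) ^ (p / 2) =
      y i * (2 - 2 * z.re) ^ (p / 2) + (1 - y i) * (2 + 2 * z.re) ^ (p / 2) := fun i => by
    rcases hy01 i with h | h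
    · simp [h]
    · rw [h, show 2 + 2 * z.re - 4 * z.re * 1 = 2 - 2 * z.re by ring]
      ring
  have htr : P.trace.re = ∑ i, y i := by
    rw [hP.trace_eq_sum_eigenvalues]
    simp [hy]
  have hN : (Fintype.card m : ℝ) ≠ 0 := by exact_mod_cast Fintype.card_ne_zero
  simp only [hterm, Finset.sum_add_distrib, ← Finset.sum_mul, Finset.sum_sub_distrib, htr,
    Finset.sum_const, Finset.card_univ, nsmul_eq_mul, mul_one]
  field_simp

/-- The `L^p` distances of a unitary `U` to `1` and `-1` determine its real part if they are those
of a scalar matrix and `p ≠ 2`. -/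
theorem add_conjTranspose_eq_of_lpnorm [Nonempty m] {p : ℝ} (hp : 0 < p) (hp2 : p ≠ 2) {c : ℝ}
    (hc : -1 ≤ c) (hc' : c ≤ 1) {U : Matrix m m ℂ} (hU : Uᴴ * U = 1)
    (h0 : lpnorm p (U + 1) ^ p = (2 + 2 * c) ^ (p / 2))
    (h1 : lpnorm p (U - 1) ^ p = (2 - 2 * c) ^ (p / 2)) :
    U + Uᴴ = (2 * c : ℂ) • (1 : Matrix m m ℂ) := by
  have hX : (U + Uᴴ).IsHermitian := isHermitian_add_transpose_self U
  obtain ⟨E, hE, hE', hd⟩ := hX.exists_unitary_diagonal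
  set x := hX.eigenvalues
  have hH0 : (U + 1)ᴴ * (U + 1) = E * diagonal (fun i => ((2 + x i : ℝ) : ℂ)) * Eᴴ := by
    have h : (fun i => ((2 + x i : ℝ) : ℂ)) = fun i => (2 : ℂ) + (1 : ℂ) * (x i : ℂ) := by
      funext i
      push_cast
      ring
    rw [h, ← smul_one_add_smul_conj hE, ← hd]
    simp only [conjTranspose_add, conjTranspose_one, mul_add, add_mul, mul_one, one_mul, hU]
    module
  have hH1 : (U - 1)ᴴ * (U - 1) = E * diagonal (fun i => ((2 - x i : ℝ) : ℂ)) * Eᴴ := by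
    have h : (fun i => ((2 - x i : ℝ) : ℂ)) = fun i => (2 : ℂ) + (-1 : ℂ) * (x i : ℂ) := by
      funext i
      push_cast
      ring
    rw [h, ← smul_one_add_smul_conj hE, ← hd]
    simp only [conjTranspose_sub, conjTranspose_one, mul_sub, sub_mul, mul_one, one_mul, hU]
    module
  obtain ⟨hn0, hs0⟩ := lpnorm_rpow_of_diagonalization hp hE' hH0
  obtain ⟨hn1, hs1⟩ := lpnorm_rpow_of_diagonalization hp hE' hH1
  have hx : ∀ i, x i = 2 * c := fun i => by
    have := eq_of_sum_rpow_eq_of_add_eq (half_pos hp) (fun h => hp2 (by linarith))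
      (by linarith : 0 ≤ 2 + 2 * c) (by linarith : 0 ≤ 2 - 2 * c) hn0 hn1
      (fun i => by ring) (hs0.symm.trans h0) (hs1.symm.trans h1) i
    linarith
  rw [hd]
  simp only [hx]
  rw [← smul_one_eq_diagonal, mul_smul_comm, mul_one, smul_mul_assoc, hE]
  push_cast
  rfl

/-- A unitary with scalar real part `c` is diagonalizable, with eigenvalues `c ± i √(1 - c ^ 2)`. -/
theorem exists_diagonalization_of_add_conjTranspose_eq {c s : ℝ} (hcs : c ^ 2 + s ^ 2 = 1)
    {U : Matrix m m ℂ} (hU : Uᴴ * U = 1)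
    (hUc : U + Uᴴ = (2 * c : ℂ) • (1 : Matrix m m ℂ)) :
    ∃ (E : Matrix m m ℂ) (y : m → ℝ), E * Eᴴ = 1 ∧ Eᴴ * E = 1 ∧ (∀ i, y i = s ∨ y i = -s) ∧
      U = E * diagonal (fun i => (c : ℂ) + Complex.I * (y i : ℂ)) * Eᴴ := by
  have hUs : Uᴴ = (2 * c : ℂ) • (1 : Matrix m m ℂ) - U := by rw [← hUc]; abel
  have hY : ((-Complex.I) • (U - (c : ℂ) • (1 : Matrix m m ℂ))).IsHermitian := by
    rw [IsHermitian, conjTranspose_smul, conjTranspose_sub, conjTranspose_smul, conjTranspose_one,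
      hUs]
    simp only [star_neg, Complex.star_def, Complex.conj_I, Complex.conj_ofReal]
    module
  obtain ⟨E, hE, hE', hd⟩ := hY.exists_unitary_diagonal
  set y := hY.eigenvalues
  have hUd : U = E * diagonal (fun i => (c : ℂ) + Complex.I * (y i : ℂ)) * Eᴴ := by
    rw [← smul_one_add_smul_conj hE, ← hd, smul_smul]
    simp
  refine ⟨E, y, hE, hE', fun i => ?_, hUd⟩
  have h1 := hU
  rw [hUd, conj_conjTranspose_mul_conj hE'] at h1
  have h2 : (diagonal (fun i => (c : ℂ) + Complex.I * (y i : ℂ)))ᴴ *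
      diagonal (fun i => (c : ℂ) + Complex.I * (y i : ℂ)) = 1 := by
    calc _ = (Eᴴ * E) * ((diagonal (fun i => (c : ℂ) + Complex.I * (y i : ℂ)))ᴴ *
          diagonal (fun i => (c : ℂ) + Complex.I * (y i : ℂ))) * (Eᴴ * E) := by
          rw [hE', one_mul, mul_one]
      _ = Eᴴ * (E * ((diagonal (fun i => (c : ℂ) + Complex.I * (y i : ℂ)))ᴴ *
          diagonal (fun i => (c : ℂ) + Complex.I * (y i : ℂ))) * Eᴴ) * E := by
          simp only [mul_assoc]
      _ = 1 := by rw [h1, mul_one, hE']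
  rw [diagonal_conjTranspose, diagonal_mul_diagonal, ← diagonal_one] at h2
  have h3 := congrArg Complex.re (congrFun (diagonal_injective h2) i)
  simp at h3
  exact sq_eq_sq_iff_eq_or_eq_neg.1 (by linarith)

/-- If a unitary has conjugate eigenvalues at `j` and `k`, the projection onto the diagonal of the
corresponding plane of eigenvectors is at a different distance than it would be for a scalar. -/
theorem exists_projection_lpnorm_ne [Nonempty m] {p : ℝ} (hp : 0 < p) (hp2 : p ≠ 2) {c : ℝ}
    (hc : -1 < c) (hc' : c < 1) {E : Matrix m m ℂ} (hE : E * Eᴴ = 1) (hE' : Eᴴ * E = 1)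
    {u : m → ℂ} (hu : ∀ i, star (u i) * u i = 1) (huc : ∀ i, u i + star (u i) = 2 * c)
    {j k : m} (hjk : j ≠ k) (hujk : u j = star (u k)) :
    ∃ P : Matrix m m ℂ, Pᴴ = P ∧ P * P = P ∧
      lpnorm p (E * diagonal u * Eᴴ - ((2 : ℂ) • P - 1)) ^ p ≠
        (P.trace.re / Fintype.card m) * (2 - 2 * c) ^ (p / 2) +
          (1 - P.trace.re / Fintype.card m) * (2 + 2 * c) ^ (p / 2) := by
  set B : Matrix m m ℂ := twoBlock j k (1 / 2) (1 / 2) (1 / 2) (1 / 2) with hB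
  have hBs : Bᴴ = B := by
    rw [hB, conjTranspose_twoBlock]
    simp
  have hBB : B * B = B := by
    rw [hB, twoBlock_mul hjk]
    norm_num
  have htr : (E * B * Eᴴ).trace = 1 := by
    rw [trace_mul_comm, ← mul_assoc, hE', one_mul, hB, trace_twoBlock hjk]
    norm_num
  refine ⟨E * B * Eᴴ, ?_, ?_, ?_⟩
  · rw [conjTranspose_mul, conjTranspose_mul, conjTranspose_conjTranspose, hBs, mul_assoc]
  · calc _ = E * (B * (Eᴴ * E) * B) * Eᴴ := by simp only [mul_assoc]
      _ = _ := by rw [hE', mul_one, hBB]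
  · obtain ⟨V, W, hVW, hH⟩ := twoBlock_conj_diagonalization hjk hu huc hujk
    have hA : E * diagonal u * Eᴴ - ((2 : ℂ) • (E * B * Eᴴ) - 1) =
        E * (diagonal u - ((2 : ℂ) • B - 1)) * Eᴴ := by
      simp only [mul_sub, sub_mul, mul_one, hE, mul_smul_comm, smul_mul_assoc]
    have hWV : (W * Eᴴ) * (E * V) = 1 := by
      calc _ = W * (Eᴴ * E) * V := by simp only [mul_assoc]
        _ = 1 := by rw [hE', mul_one, hVW]
    have hAA := conj_conjTranspose_mul_conj hE' (diagonal u - ((2 : ℂ) • B - 1))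
    rw [hH, ← hA, ← mul_assoc, ← mul_assoc, mul_assoc _ W] at hAA
    rw [(lpnorm_rpow_of_diagonalization hp hWV hAA).2, htr]
    have hterm : ∀ i, (if i = j then 4 else if i = k then 0 else 2 + 2 * c : ℝ) ^ (p / 2) =
        (2 + 2 * c) ^ (p / 2) + (if i = j then 4 ^ (p / 2) - (2 + 2 * c) ^ (p / 2) else 0) +
          (if i = k then -(2 + 2 * c) ^ (p / 2) else 0) := fun i => by
      by_cases hj : i = j
      · subst hj
        simp [hjk]
      · by_cases hk : i = k
        · subst hk
          simp [hj, Real.zero_rpow (half_pos hp).ne']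
        · simp [hj, hk]
    have hN : (Fintype.card m : ℝ) ≠ 0 := by exact_mod_cast Fintype.card_ne_zero
    simp only [hterm, Finset.sum_add_distrib, Finset.sum_ite_eq', Finset.mem_univ, if_true,
      Finset.sum_const, Finset.card_univ, nsmul_eq_mul, Complex.one_re]
    intro h
    field_simp at h
    apply Real.add_rpow_ne_rpow_add (a := 2 - 2 * c) (b := 2 + 2 * c) (q := p / 2)
      (by linarith) (by linarith) (fun h => hp2 (by linarith))
    rw [show 2 - 2 * c + (2 + 2 * c) = 4 by ring, show 2 - 2 * c = 2 * (1 - c) by ring,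
      show 2 + 2 * c = 2 * (1 + c) by ring]
    linear_combination -h

end Matrix

/-- For `p ≠ 2`, `θ ∈ (−π, π]` and unitary `U`: the identity
`‖U − (2P − I)‖_p^p = τ(P)(2 − 2cos θ)^{p/2} + (1 − τ(P))(2 + 2cos θ)^{p/2}`
holds for every projection `P` iff `U = e^{iθ}I` or `U = e^{−iθ}I`. -/
theorem stmt8 (n : ℕ) (hn : 1 ≤ n) (p : ℝ) (hp : 0 < p) (hp2 : p ≠ 2)
    (θ : ℝ) (hθ : θ ∈ Set.Ioc (-Real.pi) Real.pi)
    (U : Matrix (Fin n) (Fin n) ℂ) (hU : U ∈ Matrix.unitaryGroup (Fin n) ℂ) :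
    (∀ P : Matrix (Fin n) (Fin n) ℂ, Pᴴ = P → P * P = P →
        lpnorm p (U - ((2 : ℂ) • P - 1)) ^ p =
          (P.trace.re / n) * (2 - 2 * Real.cos θ) ^ (p / 2) +
            (1 - P.trace.re / n) * (2 + 2 * Real.cos θ) ^ (p / 2)) ↔
      (U = Complex.exp (θ * Complex.I) • 1 ∨ U = Complex.exp (-θ * Complex.I) • 1) := by
  have : Nonempty (Fin n) := ⟨⟨0, hn⟩⟩
  have hU' : Uᴴ * U = 1 := Matrix.mem_unitaryGroup_iff'.1 hU
  have hn0 : (n : ℝ) ≠ 0 := by positivity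
  constructor
  · intro h
    have h0 := h 0 (by simp) (by simp)
    have h1 := h 1 (by simp) (by simp)
    have e0 : U - ((2 : ℂ) • (0 : Matrix (Fin n) (Fin n) ℂ) - 1) = U + 1 := by simp
    have e1 : U - ((2 : ℂ) • (1 : Matrix (Fin n) (Fin n) ℂ) - 1) = U - 1 := by module
    simp only [e0, trace_zero, Complex.zero_re, zero_div, zero_mul, zero_add, sub_zero,
      one_mul] at h0
    simp only [e1, trace_one, Fintype.card_fin, Complex.natCast_re, div_self hn0, sub_self,
      zero_mul, add_zero, one_mul] at h1
    have hUc := add_conjTranspose_eq_of_lpnorm hp hp2 (Real.neg_one_le_cos θ) (Real.cos_le_one θ)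
      hU' h0 h1
    have hcs := Real.cos_sq_add_sin_sq θ
    obtain ⟨E, y, hE, hE', hy, hUd⟩ :=
      exists_diagonalization_of_add_conjTranspose_eq hcs hU' hUc
    have hscalar : ∀ t : ℝ, (∀ i, y i = t) → U = ((Real.cos θ : ℂ) + Complex.I * (t : ℂ)) • 1 := by
      intro t ht
      rw [hUd]
      simp only [ht]
      rw [← smul_one_eq_diagonal, mul_smul_comm, mul_one, smul_mul_assoc, hE]
    by_cases hp1 : ∀ i, y i = Real.sin θ
    · left
      rw [hscalar _ hp1, Complex.exp_mul_I]
      push_cast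
      rw [mul_comm Complex.I]
    by_cases hm1 : ∀ i, y i = -Real.sin θ
    · right
      rw [hscalar _ hm1, Complex.exp_mul_I, Complex.cos_neg, Complex.sin_neg]
      push_cast
      rw [mul_comm Complex.I]
    exfalso
    push Not at hp1 hm1
    obtain ⟨k, hk⟩ := hp1
    obtain ⟨j, hj⟩ := hm1
    have hk' := (hy k).resolve_left hk
    have hj' := (hy j).resolve_right hj
    have hjk : j ≠ k := by
      rintro rfl
      exact hk hj'
    have hs : Real.sin θ ≠ 0 := fun h0 => hk (by rw [hk', h0, neg_zero])
    have hs2 : 0 < Real.sin θ ^ 2 := by positivity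
    have hsq : Real.cos θ ^ 2 < 1 := by linarith
    rw [sq_lt_one_iff_abs_lt_one, abs_lt] at hsq
    have hy2 : ∀ i, y i ^ 2 = Real.sin θ ^ 2 := fun i => by
      rcases hy i with h | h <;> rw [h]
      ring
    obtain ⟨P, hPs, hPP, hne⟩ := exists_projection_lpnorm_ne hp hp2 hsq.1 hsq.2 hE hE'
      (u := fun i => (Real.cos θ : ℂ) + Complex.I * (y i : ℂ))
      (fun i => by
        apply Complex.ext
        · simp [-Complex.ofReal_cos]
          nlinarith [hy2 i]
        · simp [-Complex.ofReal_cos]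
          ring)
      (fun i => by
        apply Complex.ext <;> simp [-Complex.ofReal_cos]
        ring)
      hjk (by
        apply Complex.ext <;> simp [-Complex.ofReal_cos, hj', hk'])
    rw [← hUd, Fintype.card_fin] at hne
    exact hne (h P hPs hPP)
  · have key : ∀ z : ℂ, star z * z = 1 → z.re = Real.cos θ → U = z • 1 →
        ∀ P : Matrix (Fin n) (Fin n) ℂ, Pᴴ = P → P * P = P →
        lpnorm p (U - ((2 : ℂ) • P - 1)) ^ p =
          (P.trace.re / n) * (2 - 2 * Real.cos θ) ^ (p / 2) +
            (1 - P.trace.re / n) * (2 + 2 * Real.cos θ) ^ (p / 2) := by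
      rintro z hz hzr rfl P hPs hPP
      have := lpnorm_smul_one_sub_symmetry hp hz hPs hPP
      rwa [Fintype.card_fin, hzr] at this
    have hunit : ∀ t : ℝ, star (Complex.exp (t * Complex.I)) * Complex.exp (t * Complex.I) = 1 := by
      intro t
      rw [Complex.star_def, mul_comm, Complex.mul_conj, Complex.normSq_eq_norm_sq,
        Complex.norm_exp_ofReal_mul_I]
      simp
    rintro (h | h)
    · exact key _ (hunit θ) (Complex.exp_ofReal_mul_I_re θ) h
    · have h1 := hunit (-θ)
      have h2 := Complex.exp_ofReal_mul_I_re (-θ)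
      rw [Real.cos_neg] at h2
      push_cast at h1 h2
      exact key _ h1 h2 h
end

section
/- Let n ≥ 1, p ∈ (0,∞) with p ≠ 2, and let ψ : 𝒰(Mₙ(ℂ)) → 𝒰(Mₙ(ℂ)) be a surjective L^p-isometry with ψ(I) = I. Then either ψ(e^{iθ}·I) = e^{iθ}·I for every θ ∈ ℝ, or ψ(e^{iθ}·I) = e^{−iθ}·I for every θ ∈ ℝ. -/
open Matrix
open scoped ComplexOrder

open Unitary in
/-- If `A` is Hermitian with eigenvalues `λᵢ`, then `c - A` has eigenvalues `c - λᵢ`. -/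
theorem Matrix.IsHermitian.map_eigenvalues_of_add_eq {m : Type*} [Fintype m] [DecidableEq m]
    {A B : Matrix m m ℂ} (hA : A.IsHermitian) (hB : B.IsHermitian) (c : ℝ)
    (h : A + B = c • 1) :
    Multiset.map hB.eigenvalues Finset.univ.val =
      Multiset.map (fun i => c - hA.eigenvalues i) Finset.univ.val := by
  have hBD : B = conjStarAlgAut ℂ _ hA.eigenvectorUnitary
      (diagonal fun i => ((c - hA.eigenvalues i : ℝ) : ℂ)) := by
    have hd : (diagonal fun i => ((c - hA.eigenvalues i : ℝ) : ℂ)) =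
        c • (1 : Matrix m m ℂ) - diagonal (RCLike.ofReal ∘ hA.eigenvalues) := by
      ext i j
      by_cases hij : i = j <;> simp [diagonal, hij]
    rw [hd, map_sub, ← hA.spectral_theorem, ← Complex.coe_smul, map_smul, map_one,
      Complex.coe_smul, ← h]
    abel
  have hroots : B.charpoly.roots =
      Multiset.map (fun i => ((c - hA.eigenvalues i : ℝ) : ℂ)) Finset.univ.val := by
    have : B.charpoly =
        ∏ i, (Polynomial.X - Polynomial.C ((c - hA.eigenvalues i : ℝ) : ℂ)) := by
      rw [hBD, conjStarAlgAut_apply, charpoly_mul_comm, ← mul_assoc]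
      simp [charpoly_diagonal]
    rw [this, Polynomial.roots_prod]
    · simp [-Complex.ofReal_sub]
    · simp [-Complex.ofReal_sub, Finset.prod_ne_zero_iff, Polynomial.X_sub_C_ne_zero]
  rw [hB.roots_charpoly_eq_eigenvalues] at hroots
  have := congrArg (Multiset.map Complex.re) hroots
  simpa [Multiset.map_map, Function.comp_def] using this

theorem Matrix.IsHermitian.eq_smul_one_of_eigenvalues_eq {m : Type*} [Fintype m] [DecidableEq m]
    {A : Matrix m m ℂ} (hA : A.IsHermitian) {k : ℝ} (h : ∀ i, hA.eigenvalues i = k) :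
    A = k • 1 := by
  have hd : diagonal (RCLike.ofReal ∘ hA.eigenvalues) = k • (1 : Matrix m m ℂ) := by
    ext i j
    by_cases hij : i = j <;> simp [diagonal, hij, h]
  rw [hA.spectral_theorem, hd, ← Complex.coe_smul, map_smul, map_one]

theorem Matrix.IsHermitian.eq_of_smul_eigenvectorBasis_eq {m : Type*} [Fintype m]
    [DecidableEq m] {A : Matrix m m ℂ} (hA : A.IsHermitian) {i : m} {a b : ℝ}
    (h : a • ⇑(hA.eigenvectorBasis i) = b • ⇑(hA.eigenvectorBasis i)) : a = b := by
  have hne : ⇑(hA.eigenvectorBasis i) ≠ 0 := fun h0 =>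
    hA.eigenvectorBasis.orthonormal.ne_zero i (by ext j; simpa using congrFun h0 j)
  exact smul_left_injective ℝ hne h

/-- Eigenvalues of a Hermitian matrix annihilated by `X² - k X` are roots of that polynomial. -/
theorem Matrix.IsHermitian.eigenvalues_mul_self_of_mul_self {m : Type*} [Fintype m]
    [DecidableEq m] {A : Matrix m m ℂ} (hA : A.IsHermitian) {k : ℝ} (h : A * A = k • A)
    (i : m) : hA.eigenvalues i * hA.eigenvalues i = k * hA.eigenvalues i := by
  have hv := hA.mulVec_eigenvectorBasis i
  have h1 := congrArg (· *ᵥ ⇑(hA.eigenvectorBasis i)) h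
  simp only [← mulVec_mulVec, smul_mulVec, hv, mulVec_smul, smul_smul] at h1
  exact hA.eq_of_smul_eigenvectorBasis_eq h1

theorem Matrix.IsHermitian.eigenvalues_eq_of_eq_smul_one {m : Type*} [Fintype m]
    [DecidableEq m] {A : Matrix m m ℂ} (hA : A.IsHermitian) {k : ℝ} (h : A = k • 1)
    (i : m) : hA.eigenvalues i = k := by
  have hv := hA.mulVec_eigenvectorBasis i
  have h1 := congrArg (· *ᵥ ⇑(hA.eigenvectorBasis i)) h
  simp only [smul_mulVec, one_mulVec, hv] at h1
  exact hA.eq_of_smul_eigenvectorBasis_eq h1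

/-- The squared singular values of a complex matrix. -/
noncomputable def gramEigenvalues {m : Type*} [Fintype m] [DecidableEq m] (A : Matrix m m ℂ) :
    m → ℝ :=
  (posSemidef_conjTranspose_mul_self A).isHermitian.eigenvalues

theorem gramEigenvalues_nonneg {m : Type*} [Fintype m] [DecidableEq m] (A : Matrix m m ℂ)
    (i : m) : 0 ≤ gramEigenvalues A i :=
  (posSemidef_conjTranspose_mul_self A).eigenvalues_nonneg i

theorem gramEigenvalues_of_eq_smul_one {m : Type*} [Fintype m] [DecidableEq m]
    {A : Matrix m m ℂ} {k : ℝ} (h : Aᴴ * A = k • 1) (i : m) : gramEigenvalues A i = k :=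
  (posSemidef_conjTranspose_mul_self A).isHermitian.eigenvalues_eq_of_eq_smul_one h i

theorem lpnorm_eq_lpnorm_iff {m : Type*} [Fintype m] [DecidableEq m] [Nonempty m] {p : ℝ}
    (hp : 0 < p) (A B : Matrix m m ℂ) :
    lpnorm p A = lpnorm p B ↔
      ∑ i, gramEigenvalues A i ^ (p / 2) = ∑ i, gramEigenvalues B i ^ (p / 2) := by
  have hsum : ∀ C : Matrix m m ℂ,
      0 ≤ (∑ i, gramEigenvalues C i ^ (p / 2)) / (Fintype.card m : ℝ) := fun C =>
    div_nonneg (Finset.sum_nonneg fun i _ => Real.rpow_nonneg (gramEigenvalues_nonneg C i) _)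
      (Nat.cast_nonneg _)
  have hcard : (Fintype.card m : ℝ) ≠ 0 := Nat.cast_ne_zero.mpr Fintype.card_ne_zero
  change ((∑ i, gramEigenvalues A i ^ (p / 2)) / (Fintype.card m : ℝ)) ^ (1 / p) =
    ((∑ i, gramEigenvalues B i ^ (p / 2)) / (Fintype.card m : ℝ)) ^ (1 / p) ↔ _
  rw [Real.rpow_left_inj (hsum A) (hsum B) (one_div_ne_zero hp.ne'), div_left_inj' hcard]

/-- Matrices whose Gram matrices are the same scalar have the same `L^p`-norm. -/
theorem lpnorm_eq_of_gram_eq_smul_one {m : Type*} [Fintype m] [DecidableEq m] [Nonempty m]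
    {p : ℝ} (hp : 0 < p) {A B : Matrix m m ℂ} {k : ℝ} (hA : Aᴴ * A = k • 1)
    (hB : Bᴴ * B = k • 1) : lpnorm p A = lpnorm p B := by
  rw [lpnorm_eq_lpnorm_iff hp]
  simp only [gramEigenvalues_of_eq_smul_one hA, gramEigenvalues_of_eq_smul_one hB]

theorem eq_of_lpnorm_eq_of_gram_eq_smul_one {m : Type*} [Fintype m] [DecidableEq m] [Nonempty m]
    {p : ℝ} (hp : 0 < p) {A B : Matrix m m ℂ} {k l : ℝ} (hk : 0 ≤ k) (hl : 0 ≤ l)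
    (hA : Aᴴ * A = k • 1) (hB : Bᴴ * B = l • 1) (h : lpnorm p A = lpnorm p B) :
    k = l := by
  rw [lpnorm_eq_lpnorm_iff hp] at h
  simp only [gramEigenvalues_of_eq_smul_one hA, gramEigenvalues_of_eq_smul_one hB,
    Finset.sum_const, nsmul_eq_mul] at h
  have hcard : ((Finset.univ : Finset m).card : ℝ) ≠ 0 := by simp
  exact (Real.rpow_left_inj hk hl (by positivity)).mp (mul_left_cancel₀ hcard h)

/-- Complementary powers: `k^{1-r} x^r + (c-k)^{1-r} (c-x)^r` has a strict extremum at `x = k`,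
so its average determines `x`. -/
theorem eq_of_sum_rpow_eq_of_sum_sub_rpow_eq {m : Type*} [Fintype m] {r c k : ℝ} (hr : 0 < r)
    (hr1 : r ≠ 1) (hk : 0 < k) (hkc : k < c) {x : m → ℝ} (hx : ∀ i, 0 ≤ x i)
    (hxc : ∀ i, x i ≤ c) (h1 : ∑ i, x i ^ r = ∑ _i : m, k ^ r)
    (h2 : ∑ i, (c - x i) ^ r = ∑ _i : m, (c - k) ^ r) (i : m) : x i = k := by
  have hck : 0 < c - k := sub_pos.mpr hkc
  have hdiv : ∀ a y : ℝ, 0 < a → 0 ≤ y → (y / a) ^ r = y ^ r / a ^ r := fun a y ha hy =>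
    Real.div_rpow hy ha.le r
  have hsum : ∑ i, (k * (x i / k) ^ r + (c - k) * ((c - x i) / (c - k)) ^ r) = ∑ _i : m, c := by
    have e1 : ∀ i, (x i / k) ^ r = x i ^ r / k ^ r := fun i => hdiv _ _ hk (hx i)
    have e2 : ∀ i, ((c - x i) / (c - k)) ^ r = (c - x i) ^ r / (c - k) ^ r := fun i =>
      hdiv _ _ hck (sub_nonneg.mpr (hxc i))
    have hkr : k ^ r ≠ 0 := (Real.rpow_pos_of_pos hk r).ne'
    have hckr : (c - k) ^ r ≠ 0 := (Real.rpow_pos_of_pos hck r).ne'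
    simp only [e1, e2]
    rw [Finset.sum_add_distrib, ← Finset.mul_sum, ← Finset.mul_sum, ← Finset.sum_div,
      ← Finset.sum_div, h1, h2]
    simp only [Finset.sum_const, nsmul_eq_mul]
    field_simp
    ring
  have hb : ∀ i, r * (x i / k - 1) * k + r * ((c - x i) / (c - k) - 1) * (c - k) = 0 := by
    intro i
    field_simp
    ring
  have hs1 : ∀ i, -1 ≤ x i / k - 1 := fun i => by
    have := div_nonneg (hx i) hk.le
    linarith
  have hs2 : ∀ i, -1 ≤ (c - x i) / (c - k) - 1 := fun i => by
    have := div_nonneg (sub_nonneg.mpr (hxc i)) hck.le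
    linarith
  have hne1 : ∀ i, x i ≠ k → x i / k - 1 ≠ 0 := fun i hi h => hi (by
    field_simp at h
    linarith)
  have hne2 : ∀ i, x i ≠ k → (c - x i) / (c - k) - 1 ≠ 0 := fun i hi h => hi (by
    field_simp at h
    linarith)
  have hself : k * (k / k) ^ r + (c - k) * ((c - k) / (c - k)) ^ r = c := by
    rw [div_self hk.ne', div_self hck.ne', Real.one_rpow]
    ring
  by_contra hi
  rcases lt_or_gt_of_ne hr1 with hlt | hgt
  · have key : ∀ j, x j ≠ k →
        k * (x j / k) ^ r + (c - k) * ((c - x j) / (c - k)) ^ r < c := fun j hj => by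
      have b1 := rpow_one_add_lt_one_add_mul_self (hs1 j) (hne1 j hj) hr hlt
      have b2 := rpow_one_add_lt_one_add_mul_self (hs2 j) (hne2 j hj) hr hlt
      rw [add_sub_cancel] at b1 b2
      nlinarith [hb j, mul_lt_mul_of_pos_left b1 hk, mul_lt_mul_of_pos_left b2 hck]
    refine (Finset.sum_lt_sum (fun j _ => ?_) ⟨i, Finset.mem_univ i, key i hi⟩).ne hsum
    by_cases hj : x j = k
    · rw [hj, hself]
    · exact (key j hj).le
  · have key : ∀ j, x j ≠ k →
        c < k * (x j / k) ^ r + (c - k) * ((c - x j) / (c - k)) ^ r := fun j hj => by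
      have b1 := one_add_mul_self_lt_rpow_one_add (hs1 j) (hne1 j hj) hgt
      have b2 := one_add_mul_self_lt_rpow_one_add (hs2 j) (hne2 j hj) hgt
      rw [add_sub_cancel] at b1 b2
      nlinarith [hb j, mul_lt_mul_of_pos_left b1 hk, mul_lt_mul_of_pos_left b2 hck]
    refine (Finset.sum_lt_sum (fun j _ => ?_) ⟨i, Finset.mem_univ i, key i hi⟩).ne' hsum
    by_cases hj : x j = k
    · rw [hj, hself]
    · exact (key j hj).le

theorem gram_sub_one {m : Type*} [Fintype m] [DecidableEq m] {V : Matrix m m ℂ}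
    (hV : V ∈ unitaryGroup m ℂ) : (V - 1)ᴴ * (V - 1) = (2 : ℝ) • 1 - (V + Vᴴ) := by
  have h : Vᴴ * V = 1 := mem_unitaryGroup_iff'.mp hV
  simp only [conjTranspose_sub, conjTranspose_one, sub_mul, mul_sub, h, two_smul]
  noncomm_ring

theorem gram_add_one {m : Type*} [Fintype m] [DecidableEq m] {V : Matrix m m ℂ}
    (hV : V ∈ unitaryGroup m ℂ) : (V + 1)ᴴ * (V + 1) = (2 : ℝ) • 1 + (V + Vᴴ) := by
  have h : Vᴴ * V = 1 := mem_unitaryGroup_iff'.mp hV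
  simp only [conjTranspose_add, conjTranspose_one, add_mul, mul_add, h, two_smul]
  noncomm_ring

/-- The squared singular values of `V + 1` and `V - 1` are complementary for unitary `V`. -/
theorem map_gramEigenvalues_add_one {m : Type*} [Fintype m] [DecidableEq m] {V : Matrix m m ℂ}
    (hV : V ∈ unitaryGroup m ℂ) :
    Multiset.map (gramEigenvalues (V + 1)) Finset.univ.val =
      Multiset.map (fun i => 4 - gramEigenvalues (V - 1) i) Finset.univ.val := by
  refine IsHermitian.map_eigenvalues_of_add_eq _ _ 4 ?_
  rw [gram_sub_one hV, gram_add_one hV]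
  module

theorem gramEigenvalues_sub_one_le {m : Type*} [Fintype m] [DecidableEq m] {V : Matrix m m ℂ}
    (hV : V ∈ unitaryGroup m ℂ) (i : m) : gramEigenvalues (V - 1) i ≤ 4 := by
  have hi : 4 - gramEigenvalues (V - 1) i ∈
      Multiset.map (gramEigenvalues (V + 1)) Finset.univ.val := by
    rw [map_gramEigenvalues_add_one hV]
    exact Multiset.mem_map_of_mem _ (Finset.mem_univ i)
  obtain ⟨j, -, hj⟩ := Multiset.mem_map.mp hi
  have := gramEigenvalues_nonneg (V + 1) j
  linarith

theorem sum_gramEigenvalues_add_one {m : Type*} [Fintype m] [DecidableEq m] {V : Matrix m m ℂ}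
    (hV : V ∈ unitaryGroup m ℂ) (r : ℝ) :
    ∑ i, gramEigenvalues (V + 1) i ^ r = ∑ i, (4 - gramEigenvalues (V - 1) i) ^ r := by
  have h := congrArg (fun s => (Multiset.map (· ^ r) s).sum) (map_gramEigenvalues_add_one hV)
  simpa [Multiset.map_map, Function.comp_def] using h

/-- For `p ≠ 2`, a unitary at the same distances from `±1` as a non-real unimodular scalar has
the same real part as that scalar. -/
theorem add_conjTranspose_eq_of_lpnorm_eq {m : Type*} [Fintype m] [DecidableEq m] [Nonempty m]
    {p : ℝ} (hp : 0 < p) (hp2 : p ≠ 2) {U Z₁ Z₂ : Matrix m m ℂ} (hU : U ∈ unitaryGroup m ℂ)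
    {k : ℝ} (hk : 0 < k) (hk4 : k < 4) (hZ₁ : Z₁ᴴ * Z₁ = k • 1) (hZ₂ : Z₂ᴴ * Z₂ = (4 - k) • 1)
    (h₁ : lpnorm p (U - 1) = lpnorm p Z₁) (h₂ : lpnorm p (U + 1) = lpnorm p Z₂) :
    U + Uᴴ = (2 - k) • 1 := by
  rw [lpnorm_eq_lpnorm_iff hp] at h₁ h₂
  simp only [gramEigenvalues_of_eq_smul_one hZ₁] at h₁
  simp only [gramEigenvalues_of_eq_smul_one hZ₂, sum_gramEigenvalues_add_one hU] at h₂
  have hall := eq_of_sum_rpow_eq_of_sum_sub_rpow_eq (half_pos hp)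
    (fun h => hp2 (by linarith)) hk hk4 (gramEigenvalues_nonneg _)
    (gramEigenvalues_sub_one_le hU) h₁ h₂
  have hB := (posSemidef_conjTranspose_mul_self (U - 1)).isHermitian.eq_smul_one_of_eigenvalues_eq
    hall
  rw [gram_sub_one hU, sub_eq_iff_eq_add] at hB
  rw [sub_smul, hB]
  abel

/-- `-1` is the only unitary at maximal distance from `1`. -/
theorem eq_neg_one_of_lpnorm_eq {m : Type*} [Fintype m] [DecidableEq m] [Nonempty m]
    {p : ℝ} (hp : 0 < p) {U Z : Matrix m m ℂ} (hU : U ∈ unitaryGroup m ℂ)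
    (hZ : Zᴴ * Z = (4 : ℝ) • 1) (h : lpnorm p (U - 1) = lpnorm p Z) : U = -1 := by
  rw [lpnorm_eq_lpnorm_iff hp] at h
  simp only [gramEigenvalues_of_eq_smul_one hZ] at h
  have hle : ∀ i ∈ Finset.univ, gramEigenvalues (U - 1) i ^ (p / 2) ≤ (4 : ℝ) ^ (p / 2) :=
    fun i _ => Real.rpow_le_rpow (gramEigenvalues_nonneg _ i) (gramEigenvalues_sub_one_le hU i)
      (half_pos hp).le
  have hall : ∀ i, gramEigenvalues (U - 1) i = 4 := fun i =>
    (Real.rpow_left_inj (gramEigenvalues_nonneg _ i) (by norm_num) (half_pos hp).ne').mp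
      ((Finset.sum_eq_sum_iff_of_le hle).mp h i (Finset.mem_univ i))
  have hB := (posSemidef_conjTranspose_mul_self (U - 1)).isHermitian.eq_smul_one_of_eigenvalues_eq
    hall
  rw [gram_sub_one hU, sub_eq_iff_eq_add] at hB
  have h0 : (U + 1)ᴴ * (U + 1) = 0 := by
    rw [gram_add_one hU, hB, add_assoc, ← two_smul ℝ (U + Uᴴ)]
    have : U + Uᴴ = (-2 : ℝ) • 1 := by
      have := eq_sub_of_add_eq' hB.symm
      rw [this]
      module
    rw [this]
    module
  exact eq_neg_of_add_eq_zero_left (conjTranspose_mul_self_eq_zero.mp h0)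

/-- The only matrices commuting with all self-adjoint unitaries are the scalars. -/
theorem exists_eq_smul_one_of_commute_reflections {m : Type*} [Fintype m] [DecidableEq m]
    [Nonempty m] {V : Matrix m m ℂ}
    (h : ∀ R : Matrix m m ℂ, Rᴴ = R → R * R = 1 → R * V = V * R) : ∃ a : ℂ, V = a • 1 := by
  have hdiag : ∀ i j, i ≠ j → V i j = 0 := by
    intro i j hij
    have hR := h (diagonal fun l => if l = i then -1 else 1)
      (by rw [diagonal_conjTranspose]; congr 1; ext l; by_cases hl : l = i <;> simp [hl])
      (by rw [diagonal_mul_diagonal, ← diagonal_one]; congr 1; ext l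
          by_cases hl : l = i <;> simp [hl])
    have := congrFun (congrFun hR i) j
    simp only [diagonal_mul, mul_diagonal, if_true, if_neg hij.symm] at this
    linear_combination (-1 / 2 : ℂ) * this
  have hconst : ∀ i j, V i i = V j j := by
    intro i j
    have := congrFun (congrFun (h (swap ℂ i j) (conjTranspose_swap i j) (swap_mul_self i j)) i) j
    simpa using this.symm
  obtain ⟨i₀⟩ := ‹Nonempty m›
  refine ⟨V i₀ i₀, ?_⟩
  ext i j
  by_cases hij : i = j
  · subst hij
    simpa using hconst i i₀
  · simp [hij, hdiag i j hij]

/-- Every non-scalar matrix has distinct unitary conjugates arbitrarily close to it. -/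
theorem exists_unitary_conj_near {m : Type*} [Fintype m] [DecidableEq m] [Nonempty m]
    {V : Matrix m m ℂ} (hV : ∀ a : ℂ, V ≠ a • 1) {ε : ℝ} (hε : 0 < ε) :
    ∃ W ∈ unitaryGroup m ℂ, W * V * Wᴴ ≠ V ∧
      ((W * V * Wᴴ - V)ᴴ * (W * V * Wᴴ - V)).trace.re < ε := by
  obtain ⟨R, hR, hRR, hRV⟩ : ∃ R : Matrix m m ℂ, Rᴴ = R ∧ R * R = 1 ∧ R * V ≠ V * R := by
    by_contra! hc
    obtain ⟨a, ha⟩ := exists_eq_smul_one_of_commute_reflections hc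
    exact hV a ha
  let W : ℝ → Matrix m m ℂ := fun t =>
    (Real.cos t : ℂ) • (1 : Matrix m m ℂ) + ((Real.sin t : ℂ) * Complex.I) • R
  have hWc : Continuous W := by fun_prop
  have hWstar : ∀ t, (W t)ᴴ =
      (Real.cos t : ℂ) • (1 : Matrix m m ℂ) - ((Real.sin t : ℂ) * Complex.I) • R := fun t => by
    simp only [W, conjTranspose_add, conjTranspose_smul, conjTranspose_one, hR]
    simp [sub_eq_add_neg, -Complex.ofReal_sin, -Complex.ofReal_cos]
  have hWu : ∀ t, (W t)ᴴ * W t = 1 := fun t => by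
    have hsc : (Real.cos t : ℂ) * Real.cos t + Real.sin t * Real.sin t = 1 := by
      have := Real.cos_sq_add_sin_sq t
      rw [sq, sq] at this
      exact_mod_cast this
    rw [hWstar]
    simp only [W, sub_mul, mul_add, smul_mul_smul_comm, hRR, mul_one, one_mul]
    have : (Real.sin t : ℂ) * Complex.I * (Real.sin t * Complex.I) =
        -(Real.sin t * Real.sin t) := by
      linear_combination (Real.sin t : ℂ) * Real.sin t * Complex.I_mul_I
    rw [this, mul_comm (Real.cos t : ℂ) (_ * Complex.I)]
    conv_rhs => rw [← one_smul ℂ (1 : Matrix m m ℂ), ← hsc]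
    module
  let f : ℝ → ℝ := fun t => ((W t * V * (W t)ᴴ - V)ᴴ * (W t * V * (W t)ᴴ - V)).trace.re
  have hf : Continuous f := by fun_prop
  have hf0 : f 0 = 0 := by simp [f, W]
  have hev : ∀ᶠ t in nhdsWithin (0 : ℝ) (Set.Ioi 0), f t < ε :=
    (hf.tendsto 0).mono_left nhdsWithin_le_nhds |>.eventually_lt_const (by rwa [hf0])
  have hpi : ∀ᶠ t in nhdsWithin (0 : ℝ) (Set.Ioi 0), t ∈ Set.Ioo 0 Real.pi :=
    Ioo_mem_nhdsGT Real.pi_pos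
  obtain ⟨t, hft, ht⟩ := (hev.and hpi).exists
  refine ⟨W t, mem_unitaryGroup_iff'.mpr (hWu t), fun hc => hRV ?_, hft⟩
  have hcomm : W t * V = V * W t := by
    have := congrArg (· * W t) hc
    simpa only [mul_assoc, hWu, mul_one] using this
  have hs : (Real.sin t : ℂ) * Complex.I ≠ 0 :=
    mul_ne_zero (Complex.ofReal_ne_zero.mpr (Real.sin_pos_of_mem_Ioo ht).ne') Complex.I_ne_zero
  simp only [W, add_mul, mul_add, smul_mul_assoc, mul_smul_comm, one_mul, mul_one,
    add_right_inj] at hcomm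
  exact smul_right_injective _ hs hcomm

theorem sum_gramEigenvalues_eq_trace {m : Type*} [Fintype m] [DecidableEq m]
    (A : Matrix m m ℂ) : ∑ i, gramEigenvalues A i = (Aᴴ * A).trace.re := by
  rw [(posSemidef_conjTranspose_mul_self A).isHermitian.trace_eq_sum_eigenvalues]
  simp [gramEigenvalues]

theorem sum_gramEigenvalues_rpow_le {m : Type*} [Fintype m] [DecidableEq m]
    (A : Matrix m m ℂ) {r : ℝ} (hr : 0 ≤ r) :
    ∑ i, gramEigenvalues A i ^ r ≤ Fintype.card m * (Aᴴ * A).trace.re ^ r := by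
  rw [← nsmul_eq_mul]
  refine Finset.sum_le_card_nsmul _ _ _ fun i _ =>
    Real.rpow_le_rpow (gramEigenvalues_nonneg A i) ?_ hr
  rw [← sum_gramEigenvalues_eq_trace]
  exact Finset.single_le_sum (fun j _ => gramEigenvalues_nonneg A j) (Finset.mem_univ i)

/-- A unimodular scalar `z` is isolated among the unitaries with the same real part. -/
theorem le_sum_gramEigenvalues_sub_smul_one {m : Type*} [Fintype m] [DecidableEq m]
    {U : Matrix m m ℂ} (hU : U ∈ unitaryGroup m ℂ) {z : ℂ} (hz : star z * z = 1)
    (hre : U + Uᴴ = (2 * z.re) • 1) (hne : U ≠ z • 1) (r : ℝ) :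
    (4 * z.im ^ 2) ^ r ≤ ∑ i, gramEigenvalues (U - z • 1) i ^ r := by
  set A : Matrix m m ℂ := U - z • 1 with hA
  have hzz : ((2 * z.re : ℝ) : ℂ) = z + star z := by
    apply Complex.ext <;> simp [two_mul]
  have hUs : Uᴴ = (z + star z) • 1 - U := by
    rw [← hzz, Complex.coe_smul, ← hre]
    abel
  have hAs : Aᴴ = -A := by
    rw [hA, conjTranspose_sub, conjTranspose_smul, conjTranspose_one, hUs]
    module
  have hUU : U * U = (z + star z) • U - (star z * z) • 1 := by
    have : Uᴴ * U = 1 := mem_unitaryGroup_iff'.mp hU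
    rw [hUs, sub_mul, smul_mul_assoc, one_mul] at this
    rw [hz, one_smul, ← this]
    abel
  have hAA : A * A = (star z - z) • A := by
    simp only [hA, sub_mul, mul_sub, smul_mul_assoc, mul_smul_comm, one_mul, mul_one, hUU]
    module
  have him : ((4 * z.im ^ 2 : ℝ) : ℂ) = -(star z - z) ^ 2 := by
    apply Complex.ext
    · simp [sq]
      ring
    · simp [sq]
  have hB : (Aᴴ * A) * (Aᴴ * A) = (4 * z.im ^ 2 : ℝ) • (Aᴴ * A) := by
    rw [← Complex.coe_smul, him, hAs, neg_mul, hAA]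
    simp only [neg_mul_neg, smul_mul_smul_comm, hAA]
    module
  have hquad : ∀ i, gramEigenvalues A i = 0 ∨ gramEigenvalues A i = 4 * z.im ^ 2 := fun i => by
    have h : gramEigenvalues A i * gramEigenvalues A i = 4 * z.im ^ 2 * gramEigenvalues A i :=
      (posSemidef_conjTranspose_mul_self A).isHermitian.eigenvalues_mul_self_of_mul_self hB i
    rcases eq_or_ne (gramEigenvalues A i) 0 with h0 | h0
    · exact Or.inl h0
    · exact Or.inr (mul_right_cancel₀ h0 h)
  obtain ⟨i, hi⟩ : ∃ i, gramEigenvalues A i ≠ 0 := by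
    by_contra! hc
    have h0 : Aᴴ * A = 0 :=
      (posSemidef_conjTranspose_mul_self A).isHermitian.eigenvalues_eq_zero_iff.mp (funext hc)
    exact hne (sub_eq_zero.mp (conjTranspose_mul_self_eq_zero.mp h0))
  rw [← (hquad i).resolve_left hi]
  exact Finset.single_le_sum
    (fun j _ => Real.rpow_nonneg (gramEigenvalues_nonneg A j) r) (Finset.mem_univ i)

theorem smul_one_mem_unitaryGroup {m : Type*} [Fintype m] [DecidableEq m] {z : ℂ}
    (hz : star z * z = 1) : (z • 1 : Matrix m m ℂ) ∈ unitaryGroup m ℂ := by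
  rw [mem_unitaryGroup_iff', star_smul, star_one, smul_mul_smul_comm, hz, one_mul, one_smul]

theorem gram_smul_one {m : Type*} [Fintype m] [DecidableEq m] (w : ℂ) :
    (w • 1 : Matrix m m ℂ)ᴴ * (w • 1) = Complex.normSq w • 1 := by
  rw [conjTranspose_smul, conjTranspose_one, smul_mul_smul_comm, one_mul, ← Complex.coe_smul,
    Complex.normSq_eq_conj_mul_self]
  rfl

/-- A surjective `L^p`-isometry of the unitary group fixing `±1` maps a scalar to itself or to
its conjugate. -/
theorem isometry_apply_smul_one {m : Type*} [Fintype m] [DecidableEq m] [Nonempty m]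
    {p : ℝ} (hp : 0 < p) (hp2 : p ≠ 2) {ψ : Matrix m m ℂ → Matrix m m ℂ}
    (hmem : ∀ U ∈ unitaryGroup m ℂ, ψ U ∈ unitaryGroup m ℂ)
    (hsurj : ∀ V ∈ unitaryGroup m ℂ, ∃ U ∈ unitaryGroup m ℂ, ψ U = V)
    (hiso : ∀ U ∈ unitaryGroup m ℂ, ∀ V ∈ unitaryGroup m ℂ,
      lpnorm p (ψ U - ψ V) = lpnorm p (U - V))
    (hone : ψ 1 = 1) (hneg : ψ (-1) = -1) {z : ℂ} (hz : star z * z = 1) (him : z.im ≠ 0) :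
    ψ (z • 1) = z • 1 ∨ ψ (z • 1) = star z • 1 := by
  have hzu : (z • 1 : Matrix m m ℂ) ∈ unitaryGroup m ℂ := smul_one_mem_unitaryGroup hz
  have hnegu : (-1 : Matrix m m ℂ) ∈ unitaryGroup m ℂ := by simp [mem_unitaryGroup_iff]
  have hz2 : z.re * z.re + z.im * z.im = 1 := by
    have := congrArg Complex.re hz
    simpa using this
  have him2 : 0 < z.im * z.im := mul_self_pos.mpr him
  have hzm : (z • 1 - 1 : Matrix m m ℂ)ᴴ * (z • 1 - 1) = (2 - 2 * z.re) • 1 := by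
    have : (z • 1 - 1 : Matrix m m ℂ) = (z - 1) • 1 := by module
    rw [this, gram_smul_one, Complex.normSq_apply]
    congr 1
    simp
    linarith
  have hzp : (z • 1 + 1 : Matrix m m ℂ)ᴴ * (z • 1 + 1) = (4 - (2 - 2 * z.re)) • 1 := by
    have : (z • 1 + 1 : Matrix m m ℂ) = (z + 1) • 1 := by module
    rw [this, gram_smul_one, Complex.normSq_apply]
    congr 1
    simp
    linarith
  have hre : ∀ U ∈ unitaryGroup m ℂ, lpnorm p (U - 1) = lpnorm p (z • 1 - 1 : Matrix m m ℂ) →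
      lpnorm p (U + 1) = lpnorm p (z • 1 + 1 : Matrix m m ℂ) → U + Uᴴ = (2 * z.re) • 1 := by
    intro U hU h₁ h₂
    have := add_conjTranspose_eq_of_lpnorm_eq hp hp2 hU (by nlinarith) (by nlinarith)
      hzm hzp h₁ h₂
    rw [this]
    congr 1
    ring
  have hdist₁ : ∀ U ∈ unitaryGroup m ℂ, lpnorm p (ψ U - 1) = lpnorm p (U - 1) := fun U hU => by
    simpa only [hone] using hiso U hU 1 (one_mem _)
  have hdist₂ : ∀ U ∈ unitaryGroup m ℂ, lpnorm p (ψ U + 1) = lpnorm p (U + 1) := fun U hU => by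
    simpa only [hneg, sub_neg_eq_add] using hiso U hU (-1) hnegu
  have hVu := hmem _ hzu
  have hVre := hre _ hVu (hdist₁ _ hzu) (hdist₂ _ hzu)
  set V := ψ (z • 1) with hVdef
  by_cases hscalar : ∃ a : ℂ, V = a • 1
  · obtain ⟨a, ha⟩ := hscalar
    obtain ⟨i⟩ := ‹Nonempty m›
    have h1 : star a + a = 2 * z.re := by
      have := congrFun (congrFun hVre i) i
      simpa [ha, add_comm] using this
    have h2 : star a * a = 1 := by
      have := congrFun (congrFun (mem_unitaryGroup_iff'.mp hVu) i) i
      simpa [ha, mul_comm] using this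
    have h3 : star z + z = 2 * z.re := by
      apply Complex.ext <;> simp [two_mul]
    have h4 : (a - z) * (a - star z) = 0 := by
      linear_combination a * h1 - a * h3 - h2 + hz
    rcases mul_eq_zero.mp h4 with h | h
    · exact Or.inl (by rw [ha, sub_eq_zero.mp h])
    · exact Or.inr (by rw [ha, sub_eq_zero.mp h])
  · exfalso
    push Not at hscalar
    have hcard : (0 : ℝ) < Fintype.card m := Nat.cast_pos.mpr Fintype.card_pos
    have hg : 0 < (4 * z.im ^ 2) ^ (p / 2) := Real.rpow_pos_of_pos (by positivity) _
    have hq : 0 < (4 * z.im ^ 2) ^ (p / 2) / Fintype.card m := div_pos hg hcard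
    obtain ⟨W, hW, hWne, hWlt⟩ := exists_unitary_conj_near hscalar
      (Real.rpow_pos_of_pos hq (2 / p))
    have hWW : W * Wᴴ = 1 := mem_unitaryGroup_iff.mp hW
    have hV'u : W * V * Wᴴ ∈ unitaryGroup m ℂ :=
      mul_mem (mul_mem hW hVu) (Unitary.star_mem hW)
    have hV're : W * V * Wᴴ + (W * V * Wᴴ)ᴴ = (2 * z.re) • 1 := by
      rw [conjTranspose_mul, conjTranspose_mul, conjTranspose_conjTranspose, ← mul_assoc,
        ← add_mul, ← mul_add, hVre, mul_smul_comm, mul_one, smul_mul_assoc, hWW]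
    obtain ⟨U, hU, hψU⟩ := hsurj _ hV'u
    have hUre : U + Uᴴ = (2 * z.re) • 1 := by
      refine hre U hU ?_ ?_
      · rw [← hdist₁ U hU, hψU]
        refine lpnorm_eq_of_gram_eq_smul_one hp ?_ hzm
        rw [gram_sub_one hV'u, hV're, sub_smul]
      · rw [← hdist₂ U hU, hψU]
        refine lpnorm_eq_of_gram_eq_smul_one hp ?_ hzp
        rw [gram_add_one hV'u, hV're]
        module
    have hUne : U ≠ z • 1 := by
      rintro rfl
      exact hWne hψU.symm
    have hgap := le_sum_gramEigenvalues_sub_smul_one hU hz hUre hUne (p / 2)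
    have hsum := (lpnorm_eq_lpnorm_iff hp _ _).mp (hiso U hU _ hzu)
    rw [← hsum, hψU, ← hVdef] at hgap
    have hle := hgap.trans (sum_gramEigenvalues_rpow_le _ (half_pos hp).le)
    have htr := sum_gramEigenvalues_eq_trace (W * V * Wᴴ - V)
    have h0 : 0 ≤ ((W * V * Wᴴ - V)ᴴ * (W * V * Wᴴ - V)).trace.re := by
      rw [← htr]
      exact Finset.sum_nonneg fun i _ => gramEigenvalues_nonneg _ i
    have hlt := Real.rpow_lt_rpow h0 hWlt (half_pos hp)
    rw [← Real.rpow_mul hq.le, div_mul_div_cancel₀' two_ne_zero, div_self hp.ne', Real.rpow_one,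
      lt_div_iff₀' hcard] at hlt
    exact absurd hle (not_le.mpr hlt)

/-- The distance between unimodular scalars determines the modulus of their difference. -/
theorem normSq_sub_eq_of_lpnorm_eq {m : Type*} [Fintype m] [DecidableEq m] [Nonempty m]
    {p : ℝ} (hp : 0 < p) {a b c d : ℂ}
    (h : lpnorm p (a • 1 - b • 1 : Matrix m m ℂ) = lpnorm p (c • 1 - d • 1 : Matrix m m ℂ)) :
    Complex.normSq (a - b) = Complex.normSq (c - d) := by
  rw [← sub_smul, ← sub_smul] at h
  exact eq_of_lpnorm_eq_of_gram_eq_smul_one hp (Complex.normSq_nonneg _) (Complex.normSq_nonneg _)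
    (gram_smul_one _) (gram_smul_one _) h

/-- A surjective `L^p`-isometry (`p ≠ 2`) of the unitary group fixing `I` acts on the
scalar unitaries `e^{iθ}I` either identically or by conjugation. -/
theorem stmt10 (n : ℕ) (hn : 1 ≤ n) (p : ℝ) (hp : 0 < p) (hp2 : p ≠ 2)
    (ψ : Matrix (Fin n) (Fin n) ℂ → Matrix (Fin n) (Fin n) ℂ)
    (hmem : ∀ U ∈ Matrix.unitaryGroup (Fin n) ℂ, ψ U ∈ Matrix.unitaryGroup (Fin n) ℂ)
    (hsurj : ∀ V ∈ Matrix.unitaryGroup (Fin n) ℂ,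
      ∃ U ∈ Matrix.unitaryGroup (Fin n) ℂ, ψ U = V)
    (hiso : ∀ U ∈ Matrix.unitaryGroup (Fin n) ℂ, ∀ V ∈ Matrix.unitaryGroup (Fin n) ℂ,
      lpnorm p (ψ U - ψ V) = lpnorm p (U - V))
    (hone : ψ 1 = 1) :
    (∀ θ : ℝ, ψ (Complex.exp (θ * Complex.I) • 1) = Complex.exp (θ * Complex.I) • 1) ∨
    (∀ θ : ℝ, ψ (Complex.exp (θ * Complex.I) • 1) = Complex.exp (-θ * Complex.I) • 1) := by
  have : Nonempty (Fin n) := ⟨⟨0, hn⟩⟩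
  have hnegu : (-1 : Matrix (Fin n) (Fin n) ℂ) ∈ unitaryGroup (Fin n) ℂ := by
    simp [mem_unitaryGroup_iff]
  have hneg : ψ (-1) = -1 := by
    have hd := hiso (-1) hnegu 1 (one_mem _)
    rw [hone] at hd
    refine eq_neg_one_of_lpnorm_eq hp (hmem _ hnegu) ?_ hd
    rw [gram_sub_one hnegu, conjTranspose_neg, conjTranspose_one]
    module
  have hunit : ∀ θ : ℝ, star (Complex.exp (θ * Complex.I)) * Complex.exp (θ * Complex.I) = 1 := by
    intro θ
    have := Complex.normSq_eq_conj_mul_self (z := Complex.exp (θ * Complex.I))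
    rw [Complex.normSq_eq_norm_sq, Complex.norm_exp_ofReal_mul_I] at this
    simpa using this.symm
  have hstar : ∀ θ : ℝ, Complex.exp (-θ * Complex.I) = star (Complex.exp (θ * Complex.I)) := by
    intro θ
    rw [Complex.star_def, ← Complex.exp_conj]
    simp
  have hreal : ∀ z : ℂ, star z * z = 1 → z.im = 0 →
      ψ (z • 1) = z • 1 ∧ ψ (z • 1) = star z • 1 := by
    intro z hz him
    have hs : star z = z := Complex.conj_eq_iff_im.mpr him
    rw [hs] at hz ⊢
    rcases mul_self_eq_one_iff.mp hz with rfl | rfl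
    · simp [hone]
    · simp [hneg]
  have hall : ∀ z : ℂ, star z * z = 1 → ψ (z • 1) = z • 1 ∨ ψ (z • 1) = star z • 1 := by
    intro z hz
    by_cases him : z.im = 0
    · exact Or.inl (hreal z hz him).1
    · exact isometry_apply_smul_one hp hp2 hmem hsurj hiso hone hneg hz him
  have hI : star Complex.I * Complex.I = 1 := by simp
  have hdist : ∀ z : ℂ, star z * z = 1 → ∀ a b : ℂ, ψ (z • 1) = a • 1 →
      ψ (Complex.I • 1) = b • 1 → Complex.normSq (a - b) = Complex.normSq (z - Complex.I) := by
    intro z hz a b ha hb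
    have := hiso _ (smul_one_mem_unitaryGroup hz) _ (smul_one_mem_unitaryGroup hI)
    rw [ha, hb] at this
    exact normSq_sub_eq_of_lpnorm_eq hp this
  simp only [hstar]
  rcases hall _ hI with hψI | hψI
  · refine Or.inl fun θ => ?_
    have hz := hunit θ
    rcases hall _ hz with h | h
    · exact h
    · have hn := hdist _ hz _ _ h hψI
      refine (hreal _ hz ?_).1
      simp only [Complex.normSq_apply, Complex.sub_re, Complex.sub_im, Complex.star_def,
        Complex.conj_re, Complex.conj_im, Complex.I_re, Complex.I_im] at hn
      linarith
  · refine Or.inr fun θ => ?_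
    have hz := hunit θ
    rcases hall _ hz with h | h
    · have hn := hdist _ hz _ _ h hψI
      refine (hreal _ hz ?_).2
      simp only [Complex.normSq_apply, Complex.sub_re, Complex.sub_im, Complex.star_def,
        Complex.conj_re, Complex.conj_im, Complex.I_re, Complex.I_im] at hn
      linarith
    · exact h
end

section
/- Let n ≥ 1. Every unitary matrix V ∈ M_{2ⁿ}(ℂ) can be written as V = e^{iθ}·U₁·U₂·⋯·U_l for some θ ∈ ℝ, some l ∈ ℕ, and self-adjoint unitary matrices U₁, …, U_l ∈ M_{2ⁿ}(ℂ). -/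
open Matrix
open scoped ComplexOrder

namespace Matrix

variable {m : Type*} [Fintype m] [DecidableEq m]

variable (m) in
/-- The matrices of the form `z • (U₁ * ⋯ * U_l)` with `z` on the unit circle and every `U_k` a
self-adjoint unitary. -/
def phaseSelfAdjointUnitaryProducts : Submonoid (Matrix m m ℂ) where
  carrier := {A | ∃ (z : Circle) (L : List (Matrix m m ℂ)),
    (∀ U ∈ L, U ∈ unitaryGroup m ℂ ∧ Uᴴ = U) ∧ A = (z : ℂ) • L.prod}
  one_mem' := ⟨1, [], by simp, by simp⟩
  mul_mem' := by
    rintro _ _ ⟨z, L, hL, rfl⟩ ⟨w, M, hM, rfl⟩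
    refine ⟨z * w, L ++ M, fun U hU => ?_, by simp [smul_smul, mul_comm]⟩
    exact (List.mem_append.mp hU).elim (hL U) (hM U)

lemma mem_phaseSelfAdjointUnitaryProducts_of_isHermitian {U : Matrix m m ℂ}
    (hU : U ∈ unitaryGroup m ℂ) (hU' : Uᴴ = U) : U ∈ phaseSelfAdjointUnitaryProducts m :=
  ⟨1, [U], by simp [hU, hU'], by simp⟩

lemma circle_smul_one_mem_phaseSelfAdjointUnitaryProducts (z : Circle) :
    (z : ℂ) • (1 : Matrix m m ℂ) ∈ phaseSelfAdjointUnitaryProducts m :=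
  ⟨z, [], by simp, by simp⟩

lemma conj_mem_unitaryGroup_and_isHermitian {P U : Matrix m m ℂ} (hP : P ∈ unitaryGroup m ℂ)
    (hU : U ∈ unitaryGroup m ℂ ∧ Uᴴ = U) :
    P * U * Pᴴ ∈ unitaryGroup m ℂ ∧ (P * U * Pᴴ)ᴴ = P * U * Pᴴ :=
  ⟨mul_mem (mul_mem hP hU.1) (Unitary.star_mem hP), by
    simp [conjTranspose_mul, hU.2, Matrix.mul_assoc]⟩

lemma conj_mem_phaseSelfAdjointUnitaryProducts {P A : Matrix m m ℂ} (hP : P ∈ unitaryGroup m ℂ)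
    (hA : A ∈ phaseSelfAdjointUnitaryProducts m) :
    P * A * Pᴴ ∈ phaseSelfAdjointUnitaryProducts m := by
  obtain ⟨z, L, hL, rfl⟩ := hA
  refine ⟨z, L.map fun U => P * U * Pᴴ, ?_, ?_⟩
  · simp only [List.mem_map]
    rintro _ ⟨U, hU, rfl⟩
    exact conj_mem_unitaryGroup_and_isHermitian hP (hL U hU)
  · rw [Matrix.mul_smul, Matrix.smul_mul]
    congr 1
    have hP₁ : P * Pᴴ = 1 := Unitary.mul_star_self_of_mem hP
    have hP₂ : Pᴴ * P = 1 := Unitary.star_mul_self_of_mem hP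
    clear hL
    induction L with
    | nil => simp [hP₁]
    | cons U L ih =>
      rw [List.map_cons, List.prod_cons, List.prod_cons, ← ih]
      simp only [Matrix.mul_assoc]
      rw [← Matrix.mul_assoc Pᴴ P, hP₂, Matrix.one_mul]

variable (m) in
/-- The diagonal unitary matrix with prescribed diagonal entries on the unit circle. -/
def circleDiagonal : (m → Circle) →* Matrix m m ℂ where
  toFun c := diagonal fun i => (c i : ℂ)
  map_one' := by simp
  map_mul' c d := by simp [diagonal_mul_diagonal]

lemma circleDiagonal_apply (c : m → Circle) :
    circleDiagonal m c = diagonal fun i => (c i : ℂ) := rfl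

lemma conjTranspose_circleDiagonal (c : m → Circle) :
    (circleDiagonal m c)ᴴ = circleDiagonal m c⁻¹ := by
  simp only [circleDiagonal_apply, diagonal_conjTranspose]
  congr 1
  ext i
  exact (Circle.coe_inv_eq_conj (c i)).symm

lemma circleDiagonal_mem_unitaryGroup (c : m → Circle) :
    circleDiagonal m c ∈ unitaryGroup m ℂ := by
  rw [mem_unitaryGroup_iff, star_eq_conjTranspose, conjTranspose_circleDiagonal, ← map_mul,
    mul_inv_cancel, map_one]

lemma permMatrix_swap_mul_self (i j : m) :
    (Equiv.swap i j).permMatrix ℂ * (Equiv.swap i j).permMatrix ℂ = 1 := by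
  rw [← permMatrix_mul, Equiv.swap_mul_self, permMatrix_one]

lemma permMatrix_swap_mem_unitaryGroup_and_isHermitian (i j : m) :
    (Equiv.swap i j).permMatrix ℂ ∈ unitaryGroup m ℂ ∧
      ((Equiv.swap i j).permMatrix ℂ)ᴴ = (Equiv.swap i j).permMatrix ℂ := by
  have h : ((Equiv.swap i j).permMatrix ℂ)ᴴ = (Equiv.swap i j).permMatrix ℂ := by
    rw [conjTranspose_permMatrix, Equiv.swap_inv]
  refine ⟨?_, h⟩
  rw [mem_unitaryGroup_iff, star_eq_conjTranspose, h, permMatrix_swap_mul_self]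

lemma permMatrix_swap_mul_circleDiagonal (c : m → Circle) (i j : m) :
    (Equiv.swap i j).permMatrix ℂ * circleDiagonal m c * (Equiv.swap i j).permMatrix ℂ =
      circleDiagonal m (c ∘ Equiv.swap i j) := by
  rw [Equiv.Perm.permMatrix, PEquiv.toMatrix_toPEquiv_mul, PEquiv.mul_toMatrix_toPEquiv,
    circleDiagonal_apply, submatrix_submatrix, Equiv.symm_swap]
  exact submatrix_diagonal_equiv _ (Equiv.swap i j)

/-- Conjugating a transposition matrix by a diagonal unitary gives a self-adjoint unitary, so the
quotient of a diagonal unitary by its transposed copy is a product of two of these. -/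
lemma circleDiagonal_div_swap_mem (c : m → Circle) (i j : m) :
    circleDiagonal m (c * (c ∘ Equiv.swap i j)⁻¹) ∈ phaseSelfAdjointUnitaryProducts m := by
  have hR := permMatrix_swap_mem_unitaryGroup_and_isHermitian i j
  have hC := conj_mem_unitaryGroup_and_isHermitian (circleDiagonal_mem_unitaryGroup c) hR
  have key := mul_mem (mem_phaseSelfAdjointUnitaryProducts_of_isHermitian hC.1 hC.2)
    (mem_phaseSelfAdjointUnitaryProducts_of_isHermitian hR.1 hR.2)
  rw [conjTranspose_circleDiagonal, Matrix.mul_assoc, Matrix.mul_assoc, ← Matrix.mul_assoc _ _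
    (Equiv.Perm.permMatrix ℂ _), permMatrix_swap_mul_circleDiagonal, ← map_mul] at key
  exact key

lemma circleDiagonal_mulSingle_div_mem (i j : m) (w : Circle) :
    circleDiagonal m (Pi.mulSingle i w * (Pi.mulSingle j w)⁻¹) ∈
      phaseSelfAdjointUnitaryProducts m := by
  convert! circleDiagonal_div_swap_mem (Pi.mulSingle i w) i j using 4
  ext k
  simp only [Pi.mulSingle_apply, Function.comp_apply, Equiv.swap_apply_eq_iff,
    Equiv.swap_apply_left]

lemma circleDiagonal_mulSingle_mem (i : m) (z : Circle) :
    circleDiagonal m (Pi.mulSingle i z) ∈ phaseSelfAdjointUnitaryProducts m := by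
  have hcard : (Fintype.card m : ℝ) ≠ 0 := by
    exact_mod_cast (Fintype.card_pos_iff.mpr ⟨i⟩).ne'
  obtain ⟨w, hw⟩ : ∃ w : Circle, w ^ Fintype.card m = z := by
    refine ⟨Circle.exp (Complex.arg z / Fintype.card m), ?_⟩
    rw [← Circle.exp_natCast_mul, mul_div_cancel₀ _ hcard, Circle.exp_arg]
  have hprod : (Pi.mulSingle i z : m → Circle) =
      (fun _ => w) * ∏ j, (Pi.mulSingle i w * (Pi.mulSingle j w)⁻¹) := by
    rw [Finset.prod_mul_distrib, Finset.prod_inv_distrib,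
      Finset.univ_prod_mulSingle (fun _ : m => w), Finset.prod_const, Finset.card_univ,
      ← Pi.mulSingle_pow, hw, mul_comm, inv_mul_cancel_right]
  rw [hprod, map_mul]
  refine mul_mem ?_ ?_
  · convert! circle_smul_one_mem_phaseSelfAdjointUnitaryProducts (m := m) w
    rw [circleDiagonal_apply, smul_one_eq_diagonal]
  · exact prod_mem (S := (phaseSelfAdjointUnitaryProducts m).comap (circleDiagonal m))
      fun j _ => circleDiagonal_mulSingle_div_mem i j w

theorem circleDiagonal_mem_phaseSelfAdjointUnitaryProducts (c : m → Circle) :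
    circleDiagonal m c ∈ phaseSelfAdjointUnitaryProducts m := by
  suffices c ∈ (phaseSelfAdjointUnitaryProducts m).comap (circleDiagonal m) from this
  rw [← Finset.univ_prod_mulSingle c]
  exact prod_mem fun i _ => circleDiagonal_mulSingle_mem i (c i)

open scoped Matrix.Norms.L2Operator in
/-- Every unitary complex matrix is the exponential of `i` times a Hermitian matrix. -/
lemma exists_isHermitian_exp_eq_of_mem_unitaryGroup {V : Matrix m m ℂ}
    (hV : V ∈ unitaryGroup m ℂ) :
    ∃ H : Matrix m m ℂ, H.IsHermitian ∧ NormedSpace.exp (Complex.I • H) = V := by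
  have hcont : ∀ f : ℂ → ℂ, ContinuousOn f (spectrum ℂ V) := fun f =>
    V.finite_spectrum.continuousOn f
  have hnormal : IsStarNormal V := isStarNormal_of_mem_unitary hV
  have harg := hcont (Complex.ofReal ∘ Complex.arg)
  refine ⟨cfc (Complex.ofReal ∘ Complex.arg : ℂ → ℂ) V, IsSelfAdjoint.cfc_arg V, ?_⟩
  rw [← CFC.exp_eq_normedSpace_exp (𝕜 := ℂ), ← cfc_comp_smul .., ← cfc_comp' ..]
  conv_rhs => rw [← cfc_id' ℂ V]
  refine cfc_congr fun y hy => ?_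
  have hy₁ : ‖y‖ = 1 := spectrum.norm_eq_one_of_unitary hV hy
  have hlog : Complex.I * y.arg = Complex.log y :=
    Complex.ext (by simp [Complex.log_re, hy₁]) (by simp [Complex.log_im])
  have hy₀ : y ≠ 0 := by
    rintro rfl
    simp at hy₁
  simpa [← Complex.exp_eq_exp_ℂ, hlog] using Complex.exp_log hy₀

/-- Unitary diagonalization of a unitary complex matrix. -/
theorem exists_eq_conj_circleDiagonal {V : Matrix m m ℂ} (hV : V ∈ unitaryGroup m ℂ) :
    ∃ P ∈ unitaryGroup m ℂ, ∃ c : m → Circle, V = P * circleDiagonal m c * Pᴴ := by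
  obtain ⟨H, hH, rfl⟩ := exists_isHermitian_exp_eq_of_mem_unitaryGroup hV
  let P : Matrix m m ℂ := (hH.eigenvectorUnitary : unitaryGroup m ℂ).1
  have hP : P ∈ unitaryGroup m ℂ := hH.eigenvectorUnitary.2
  have hPinv : P⁻¹ = Pᴴ := inv_eq_right_inv (Unitary.mul_star_self_of_mem hP)
  have hPunit : IsUnit P := ⟨⟨P, Pᴴ, Unitary.mul_star_self_of_mem hP,
    Unitary.star_mul_self_of_mem hP⟩, rfl⟩
  refine ⟨P, hP, fun i => Circle.exp (hH.eigenvalues i), ?_⟩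
  have hspec : Complex.I • H =
      P * diagonal (fun i => Complex.I * (hH.eigenvalues i : ℂ)) * P⁻¹ := by
    conv_lhs => rw [hH.spectral_theorem, Unitary.conjStarAlgAut_apply]
    rw [hPinv, ← Matrix.smul_mul, ← Matrix.mul_smul, ← diagonal_smul]
    rfl
  rw [hspec, exp_conj _ _ hPunit, exp_diagonal, hPinv, circleDiagonal_apply]
  congr 3
  ext i
  rw [Pi.coe_exp, ← Complex.exp_eq_exp_ℂ, Circle.coe_exp, mul_comm]

theorem mem_phaseSelfAdjointUnitaryProducts_of_mem_unitaryGroup {V : Matrix m m ℂ}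
    (hV : V ∈ unitaryGroup m ℂ) : V ∈ phaseSelfAdjointUnitaryProducts m := by
  obtain ⟨P, hP, c, rfl⟩ := exists_eq_conj_circleDiagonal hV
  exact conj_mem_phaseSelfAdjointUnitaryProducts hP
    (circleDiagonal_mem_phaseSelfAdjointUnitaryProducts c)

end Matrix

/-- Every unitary in `M_{2ⁿ}(ℂ)` is a complex number of modulus one times a product of
self-adjoint unitaries. -/
theorem stmt11 (n : ℕ) (hn : 1 ≤ n)
    (V : Matrix (Fin (2 ^ n)) (Fin (2 ^ n)) ℂ)
    (hV : V ∈ Matrix.unitaryGroup (Fin (2 ^ n)) ℂ) :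
    ∃ (θ : ℝ) (l : ℕ) (U : Fin l → Matrix (Fin (2 ^ n)) (Fin (2 ^ n)) ℂ),
      (∀ i, U i ∈ Matrix.unitaryGroup (Fin (2 ^ n)) ℂ ∧ (U i)ᴴ = U i) ∧
      V = Complex.exp (θ * Complex.I) • (List.ofFn U).prod := by
  obtain ⟨z, L, hL, rfl⟩ := Matrix.mem_phaseSelfAdjointUnitaryProducts_of_mem_unitaryGroup hV
  refine ⟨Complex.arg z, L.length, L.get, fun i => hL _ (L.get_mem i), ?_⟩
  rw [List.ofFn_get, ← Circle.coe_exp, Circle.exp_arg]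
end

section
/- Let n ≥ 1 and p ∈ (0,∞). Identify M_{2n}(ℂ) with 2×2 block matrices over Mₙ(ℂ) (via fromBlocks), and let 𝒫_{1/2} denote the set of projections in M_{2n}(ℂ) of normalized trace 1/2. Let φ : 𝒫_{1/2} → 𝒫_{1/2} be a surjective L^p-isometry such that φ(fromBlocks(I, 0, 0, 0)) = fromBlocks(I, 0, 0, 0) and φ((1/2)·fromBlocks(I, V, Vᴴ, I)) = (1/2)·fromBlocks(I, V, Vᴴ, I) for every unitary V ∈ Mₙ(ℂ). Then φ(Q) = Q for every Q ∈ 𝒫_{1/2}. -/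
open Matrix
open scoped ComplexOrder

section Frobenius

open scoped Matrix.Norms.Frobenius

variable {m : Type*} [Fintype m] [DecidableEq m]

theorem frobenius_norm_entry_le (A : Matrix m m ℂ) (i j : m) : ‖A i j‖ ≤ ‖A‖ := by
  rw [Matrix.frobenius_norm_def, ← Real.sqrt_eq_rpow]
  apply Real.le_sqrt_of_sq_le
  have h1 := Finset.single_le_sum (f := fun j => ‖A i j‖ ^ (2 : ℝ)) (s := Finset.univ)
    (fun j _ => by positivity) (Finset.mem_univ j)
  have h2 := Finset.single_le_sum (f := fun i => ∑ j, ‖A i j‖ ^ (2 : ℝ)) (s := Finset.univ)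
    (fun j _ => by positivity) (Finset.mem_univ i)
  simpa using h1.trans h2

theorem frobenius_norm_le_card_mul (A : Matrix m m ℂ) {c : ℝ} (hc : 0 ≤ c)
    (h : ∀ i j, ‖A i j‖ ≤ c) : ‖A‖ ≤ Fintype.card m * c := by
  rw [Matrix.frobenius_norm_def, ← Real.sqrt_eq_rpow]
  apply Real.sqrt_le_iff.mpr ⟨by positivity, ?_⟩
  calc ∑ i, ∑ j, ‖A i j‖ ^ (2 : ℝ) ≤ ∑ _i : m, ∑ _j : m, c ^ (2 : ℝ) := by
        gcongr with i _ j _; exact h i j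
    _ = _ := by simp; ring

theorem frobenius_norm_unitary_le {U : Matrix m m ℂ} (hU : U ∈ Matrix.unitaryGroup m ℂ) :
    ‖U‖ ≤ Fintype.card m := by
  simpa using frobenius_norm_le_card_mul U zero_le_one (entry_norm_bound_of_unitary hU)

theorem frobenius_norm_unitary_mul_mul_le {U V : Matrix m m ℂ}
    (hU : U ∈ Matrix.unitaryGroup m ℂ) (hV : V ∈ Matrix.unitaryGroup m ℂ) (A : Matrix m m ℂ) :
    ‖U * A * V‖ ≤ (Fintype.card m : ℝ) ^ 2 * ‖A‖ := by
  calc ‖U * A * V‖ ≤ ‖U‖ * ‖A‖ * ‖V‖ := norm_mul₃_le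
    _ ≤ Fintype.card m * ‖A‖ * Fintype.card m := by
      gcongr
      · exact frobenius_norm_unitary_le hU
      · exact frobenius_norm_unitary_le hV
    _ = _ := by ring

theorem frobenius_norm_sq_eq (A : Matrix m m ℂ) : ‖A‖ ^ 2 = (Aᴴ * A).trace.re := by
  rw [Matrix.frobenius_norm_def, ← Real.sqrt_eq_rpow, Real.sq_sqrt (by positivity)]
  simp only [Matrix.trace, Matrix.diag_apply, Matrix.mul_apply, Matrix.conjTranspose_apply,
    Complex.re_sum]
  rw [Finset.sum_comm]
  refine Finset.sum_congr rfl fun i _ => Finset.sum_congr rfl fun j _ => ?_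
  rw [RCLike.star_def, ← Complex.normSq_eq_conj_mul_self, Complex.ofReal_re,
    Complex.normSq_eq_norm_sq]
  simp

theorem sum_norm_sq_row_unitary {W : Matrix m m ℂ} (hW : W ∈ Matrix.unitaryGroup m ℂ) (i : m) :
    ∑ j, ‖W i j‖ ^ 2 = 1 := by
  have h := congrFun (congrFun (Matrix.mem_unitaryGroup_iff.mp hW) i) i
  simp only [Matrix.mul_apply, Matrix.star_apply, Matrix.one_apply_eq, RCLike.star_def,
    Complex.mul_conj, Complex.normSq_eq_norm_sq] at h
  exact_mod_cast h

theorem sum_norm_sq_col_unitary {W : Matrix m m ℂ} (hW : W ∈ Matrix.unitaryGroup m ℂ) (j : m) :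
    ∑ i, ‖W i j‖ ^ 2 = 1 := by
  have h := sum_norm_sq_row_unitary (Unitary.star_mem hW) j
  simpa [Matrix.star_apply] using h

theorem Matrix.IsHermitian.star_eigenvectorUnitary_mul {X : Matrix m m ℂ} (hX : X.IsHermitian) :
    star (hX.eigenvectorUnitary : Matrix m m ℂ) * X =
      Matrix.diagonal (fun i => (hX.eigenvalues i : ℂ)) *
        star (hX.eigenvectorUnitary : Matrix m m ℂ) := by
  have h := hX.spectral_theorem
  rw [Unitary.conjStarAlgAut_apply] at h
  have h2 := congrArg (star (hX.eigenvectorUnitary : Matrix m m ℂ) * ·) h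
  simp only [← mul_assoc, Unitary.coe_star_mul_self, one_mul] at h2
  exact h2

theorem Matrix.IsHermitian.mul_eigenvectorUnitary {X : Matrix m m ℂ} (hX : X.IsHermitian) :
    X * (hX.eigenvectorUnitary : Matrix m m ℂ) =
      (hX.eigenvectorUnitary : Matrix m m ℂ) *
        Matrix.diagonal (fun i => (hX.eigenvalues i : ℂ)) := by
  have h := congrArg star hX.star_eigenvectorUnitary_mul
  simpa [Matrix.star_eq_conjTranspose, hX.eq, Matrix.diagonal_conjTranspose, Pi.star_def] using h

theorem abs_eigenvalues_sub_le {X : Matrix m m ℂ} (hX : X.IsHermitian) (r : ℝ) (i : m) :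
    |hX.eigenvalues i - r| ≤ (Fintype.card m : ℝ) ^ 2 * ‖X - (r : ℂ) • (1 : Matrix m m ℂ)‖ := by
  set U := (hX.eigenvectorUnitary : Matrix m m ℂ) with hU
  have hmem : U ∈ Matrix.unitaryGroup m ℂ := hX.eigenvectorUnitary.2
  have h : star U * (X - (r : ℂ) • (1 : Matrix m m ℂ)) * U =
      Matrix.diagonal (fun i => (hX.eigenvalues i : ℂ)) - (r : ℂ) • (1 : Matrix m m ℂ) := by
    rw [mul_sub, sub_mul, hU, hX.star_eigenvectorUnitary_mul, mul_assoc]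
    simp
  have h1 := frobenius_norm_entry_le (star U * (X - (r : ℂ) • (1 : Matrix m m ℂ)) * U) i i
  refine le_trans ?_ (h1.trans (frobenius_norm_unitary_mul_mul_le (Unitary.star_mem hmem) hmem _))
  rw [h]
  simp only [Matrix.sub_apply, Matrix.diagonal_apply_eq, Matrix.smul_apply, Matrix.one_apply_eq,
    smul_eq_mul, mul_one, ← Complex.ofReal_sub, Complex.norm_real, Real.norm_eq_abs, le_refl]

/-- A function that is `η`-Lipschitz on the eigenvalues has a Lipschitz trace. -/
theorem abs_sum_eigenvalues_sub_le {X Y : Matrix m m ℂ} (hX : X.IsHermitian) (hY : Y.IsHermitian)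
    (f : ℝ → ℝ) {η : ℝ} (hη : 0 ≤ η)
    (hf : ∀ i j, |f (hX.eigenvalues i) - f (hY.eigenvalues j)| ≤
      η * |hX.eigenvalues i - hY.eigenvalues j|) :
    |∑ i, f (hX.eigenvalues i) - ∑ i, f (hY.eigenvalues i)| ≤
      η * ((Fintype.card m : ℝ) ^ 4 * ‖X - Y‖) := by
  set U := (hX.eigenvectorUnitary : Matrix m m ℂ) with hU
  set V := (hY.eigenvectorUnitary : Matrix m m ℂ) with hV
  have hUm : U ∈ Matrix.unitaryGroup m ℂ := hX.eigenvectorUnitary.2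
  have hVm : V ∈ Matrix.unitaryGroup m ℂ := hY.eigenvectorUnitary.2
  set W := star U * V with hW
  have hWm : W ∈ Matrix.unitaryGroup m ℂ := mul_mem (Unitary.star_mem hUm) hVm
  have hentry : ∀ i j, (star U * (X - Y) * V) i j =
      ((hX.eigenvalues i - hY.eigenvalues j : ℝ) : ℂ) * W i j := by
    intro i j
    rw [mul_sub, sub_mul, hU, hX.star_eigenvectorUnitary_mul, mul_assoc _ Y, hV,
      hY.mul_eigenvectorUnitary, ← mul_assoc, mul_assoc (Matrix.diagonal _)]
    rw [Matrix.sub_apply, Matrix.diagonal_mul, Matrix.mul_diagonal]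
    push_cast
    rw [sub_mul, mul_comm (W i j)]
  have hbound : ∀ i j, ‖W i j‖ ^ 2 * |hX.eigenvalues i - hY.eigenvalues j| ≤
      (Fintype.card m : ℝ) ^ 2 * ‖X - Y‖ := by
    intro i j
    refine le_trans ?_ ((frobenius_norm_entry_le _ i j).trans
      (frobenius_norm_unitary_mul_mul_le (Unitary.star_mem hUm) hVm (X - Y)))
    rw [hentry, norm_mul, Complex.norm_real, Real.norm_eq_abs, mul_comm]
    gcongr
    have h0 := norm_nonneg (W i j)
    have h1 := entry_norm_bound_of_unitary hWm i j
    nlinarith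
  have hx : ∑ i, f (hX.eigenvalues i) = ∑ i, ∑ j, ‖W i j‖ ^ 2 * f (hX.eigenvalues i) := by
    simp only [← Finset.sum_mul, sum_norm_sq_row_unitary hWm, one_mul]
  have hy : ∑ i, f (hY.eigenvalues i) = ∑ i, ∑ j, ‖W i j‖ ^ 2 * f (hY.eigenvalues j) := by
    rw [Finset.sum_comm]
    simp only [← Finset.sum_mul, sum_norm_sq_col_unitary hWm, one_mul]
  rw [hx, hy, ← Finset.sum_sub_distrib]
  simp only [← Finset.sum_sub_distrib, ← mul_sub]
  calc |∑ i, ∑ j, ‖W i j‖ ^ 2 * (f (hX.eigenvalues i) - f (hY.eigenvalues j))|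
      ≤ ∑ i, ∑ j, |‖W i j‖ ^ 2 * (f (hX.eigenvalues i) - f (hY.eigenvalues j))| :=
        (Finset.abs_sum_le_sum_abs _ _).trans
          (Finset.sum_le_sum fun i _ => Finset.abs_sum_le_sum_abs _ _)
    _ ≤ ∑ _i : m, ∑ _j : m, η * ((Fintype.card m : ℝ) ^ 2 * ‖X - Y‖) := by
        refine Finset.sum_le_sum fun i _ => Finset.sum_le_sum fun j _ => ?_
        rw [abs_mul, abs_of_nonneg (by positivity : (0 : ℝ) ≤ ‖W i j‖ ^ 2)]
        calc _ ≤ ‖W i j‖ ^ 2 * (η * |hX.eigenvalues i - hY.eigenvalues j|) := by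
              gcongr; exact hf i j
          _ = η * (‖W i j‖ ^ 2 * |hX.eigenvalues i - hY.eigenvalues j|) := by ring
          _ ≤ _ := mul_le_mul_of_nonneg_left (hbound i j) hη
    _ = _ := by simp; ring

/-- The sum of the `(p/2)`-th powers of the eigenvalues of `Aᴴ * A`. -/
noncomputable def lpSum (p : ℝ) (A : Matrix m m ℂ) : ℝ :=
  ∑ i, ((Matrix.posSemidef_conjTranspose_mul_self A).isHermitian.eigenvalues i) ^ (p / 2)

theorem lpSum_nonneg (p : ℝ) (A : Matrix m m ℂ) : 0 ≤ lpSum p A :=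
  Finset.sum_nonneg fun i _ => Real.rpow_nonneg (eigenvalues_conjTranspose_mul_self_nonneg A i) _

theorem lpSum_eq_of_lpnorm_eq [Nonempty m] {p : ℝ} (hp : 0 < p) {A B : Matrix m m ℂ}
    (h : lpnorm p A = lpnorm p B) : lpSum p A = lpSum p B := by
  have hc : (0 : ℝ) < Fintype.card m := by exact_mod_cast Fintype.card_pos
  have h1 := Real.rpow_left_injOn (x := 1 / p) (by positivity)
    (div_nonneg (lpSum_nonneg p A) hc.le) (div_nonneg (lpSum_nonneg p B) hc.le) h
  exact (div_left_inj' hc.ne').mp h1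

theorem sum_eigenvalues_conjTranspose_mul_self (A : Matrix m m ℂ) :
    ∑ i, (Matrix.posSemidef_conjTranspose_mul_self A).isHermitian.eigenvalues i = ‖A‖ ^ 2 := by
  rw [frobenius_norm_sq_eq,
    (Matrix.posSemidef_conjTranspose_mul_self A).isHermitian.trace_eq_sum_eigenvalues]
  simp

theorem lpnorm_unitary_conj (p : ℝ) {g : Matrix m m ℂ} (hg : g ∈ Matrix.unitaryGroup m ℂ)
    (A : Matrix m m ℂ) : lpnorm p (gᴴ * A * g) = lpnorm p A := by
  have hg1 : g * gᴴ = 1 := Matrix.mem_unitaryGroup_iff.mp hg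
  have h : (Matrix.posSemidef_conjTranspose_mul_self (gᴴ * A * g)).isHermitian.eigenvalues =
      (Matrix.posSemidef_conjTranspose_mul_self A).isHermitian.eigenvalues := by
    rw [Matrix.IsHermitian.eigenvalues_eq_eigenvalues_iff]
    have : (gᴴ * A * g)ᴴ * (gᴴ * A * g) = gᴴ * (Aᴴ * A) * g := by
      simp only [Matrix.conjTranspose_mul, Matrix.conjTranspose_conjTranspose]
      calc gᴴ * (Aᴴ * g) * (gᴴ * A * g) = gᴴ * Aᴴ * (g * gᴴ) * A * g := by noncomm_ring
        _ = _ := by rw [hg1]; noncomm_ring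
    rw [this, Matrix.charpoly_mul_comm, ← mul_assoc, hg1, one_mul]
  unfold lpnorm
  rw [h]

/-- For each radius there is a smaller one so that smallness passes between matrices
of equal `L^p`-norm. -/
theorem exists_norm_lt_of_lpSum_eq [Nonempty m] {p : ℝ} (hp : 0 < p) {δ : ℝ} (hδ : 0 < δ) :
    ∃ δ' > 0, ∀ A B : Matrix m m ℂ, lpSum p A = lpSum p B → ‖A‖ < δ' → ‖B‖ < δ := by
  set N : ℝ := (Fintype.card m : ℝ) with hN
  have hNpos : 0 < N := by rw [hN]; exact_mod_cast Fintype.card_pos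
  have hp2 : 0 < p / 2 := by positivity
  -- all eigenvalues of `Bᴴ * B` are below `t`
  set t : ℝ := δ ^ 2 / (2 * N) with ht
  have htpos : 0 < t := by positivity
  set s : ℝ := (t ^ (p / 2) / N) ^ (p / 2)⁻¹ with hs
  have hspos : 0 < s := by positivity
  have hs' : s ^ (p / 2) = t ^ (p / 2) / N := by
    rw [hs, Real.rpow_inv_rpow (by positivity) hp2.ne']
  refine ⟨Real.sqrt s, Real.sqrt_pos.mpr hspos, fun A B hAB hA => ?_⟩
  have hA2 : ‖A‖ ^ 2 < s := by
    have := (Real.lt_sqrt (norm_nonneg A)).mp hA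
    exact this
  have hAi : ∀ i, (Matrix.posSemidef_conjTranspose_mul_self A).isHermitian.eigenvalues i ≤ s := by
    intro i
    have := Finset.single_le_sum
      (f := (Matrix.posSemidef_conjTranspose_mul_self A).isHermitian.eigenvalues)
      (fun j _ => eigenvalues_conjTranspose_mul_self_nonneg A j) (Finset.mem_univ i)
    rw [sum_eigenvalues_conjTranspose_mul_self] at this
    linarith
  have hsum : lpSum p B ≤ t ^ (p / 2) := by
    rw [← hAB]
    calc lpSum p A ≤ ∑ _i : m, s ^ (p / 2) := Finset.sum_le_sum fun i _ =>
          Real.rpow_le_rpow (eigenvalues_conjTranspose_mul_self_nonneg A i) (hAi i) hp2.le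
      _ = t ^ (p / 2) := by
          rw [hs', Finset.sum_const, Finset.card_univ, nsmul_eq_mul, ← hN]; field_simp
  have hBi : ∀ i, (Matrix.posSemidef_conjTranspose_mul_self B).isHermitian.eigenvalues i ≤ t := by
    intro i
    have := Finset.single_le_sum
      (f := fun j => (Matrix.posSemidef_conjTranspose_mul_self B).isHermitian.eigenvalues j
        ^ (p / 2))
      (fun j _ => Real.rpow_nonneg (eigenvalues_conjTranspose_mul_self_nonneg B j) _)
      (Finset.mem_univ i)
    exact (Real.rpow_le_rpow_iff (eigenvalues_conjTranspose_mul_self_nonneg B i) htpos.le hp2).mp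
      (this.trans hsum)
  have hB2 : ‖B‖ ^ 2 ≤ N * t := by
    rw [← sum_eigenvalues_conjTranspose_mul_self]
    calc _ ≤ ∑ _i : m, t := Finset.sum_le_sum fun i _ => hBi i
      _ = N * t := by rw [Finset.sum_const, Finset.card_univ, nsmul_eq_mul, ← hN]
  have hNt : N * t = δ ^ 2 / 2 := by rw [ht]; field_simp
  refine lt_of_pow_lt_pow_left₀ 2 hδ.le ?_
  nlinarith [sq_pos_of_pos hδ]

/-- The unitary matrices near `1` span the space of all matrices over `ℝ`. -/
theorem span_unitary_near_one_eq_top {ρ : ℝ} (hρ : 0 < ρ) :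
    Submodule.span ℝ {V : Matrix m m ℂ | V ∈ Matrix.unitaryGroup m ℂ ∧ ‖V - 1‖ < ρ} = ⊤ := by
  by_contra hne
  obtain ⟨ℓ, hℓ, hker⟩ := Submodule.exists_le_ker_of_lt_top _ (lt_top_iff_ne_top.mpr hne)
  have hzero : ∀ V : Matrix m m ℂ, V ∈ Matrix.unitaryGroup m ℂ → ‖V - 1‖ < ρ → ℓ V = 0 :=
    fun V hV hV1 => hker (Submodule.subset_span ⟨hV, hV1⟩)
  let L : Matrix m m ℂ →L[ℝ] ℝ := LinearMap.toContinuousLinearMap ℓ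
  have hphase : ∀ z : ℂ, star z * z = 1 → ‖z • (1 : Matrix m m ℂ) - 1‖ < ρ →
      ∀ K : Matrix m m ℂ, K ∈ skewAdjoint (Matrix m m ℂ) → ℓ (z • K) = 0 := by
    intro z hz hz1 K hK
    have hd : HasDerivAt (fun t : ℝ => z • NormedSpace.exp (t • K)) (z • K) 0 := by
      have h := (hasDerivAt_exp_smul_const (𝕂 := ℝ) K (0 : ℝ)).const_smul z
      rw [zero_smul, NormedSpace.exp_zero, one_mul] at h
      exact h
    have hLd : HasDerivAt (fun t : ℝ => L (z • NormedSpace.exp (t • K))) (L (z • K)) 0 :=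
      L.hasFDerivAt.comp_hasDerivAt 0 hd
    have hev : (fun t : ℝ => L (z • NormedSpace.exp (t • K))) =ᶠ[nhds 0] fun _ => 0 := by
      have hc : Filter.Tendsto (fun t : ℝ => ‖z • NormedSpace.exp (t • K) - 1‖) (nhds 0)
          (nhds ‖z • (1 : Matrix m m ℂ) - 1‖) := by
        have h : ContinuousAt
            (fun t : ℝ => ‖z • NormedSpace.exp (t • K) - (1 : Matrix m m ℂ)‖) 0 :=
          (hd.continuousAt.sub continuousAt_const).norm
        simpa [ContinuousAt] using h
      filter_upwards [hc.eventually_lt_const hz1] with t ht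
      refine hzero _ ?_ ht
      have hu : NormedSpace.exp (t • K) ∈ unitary (Matrix m m ℂ) :=
        NormedSpace.exp_mem_unitary_of_mem_skewAdjoint (skewAdjoint.smul_mem t hK)
      rw [Matrix.mem_unitaryGroup_iff']
      rw [star_smul, smul_mul_smul_comm, hz, one_smul]
      exact (Unitary.mem_iff.mp hu).1
    exact hLd.unique ((hasDerivAt_const (0 : ℝ) (0 : ℝ)).congr_of_eventuallyEq hev)
  obtain ⟨θ, hθ1, hθ0⟩ : ∃ θ : ℝ,
      ‖Complex.exp (θ * Complex.I) • (1 : Matrix m m ℂ) - 1‖ < ρ ∧ Real.sin θ ≠ 0 := by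
    have hc : Filter.Tendsto
        (fun θ : ℝ => ‖Complex.exp (θ * Complex.I) • (1 : Matrix m m ℂ) - 1‖)
        (nhdsWithin 0 (Set.Ioi 0)) (nhds 0) := by
      have : Continuous
          (fun θ : ℝ => ‖Complex.exp (θ * Complex.I) • (1 : Matrix m m ℂ) - 1‖) := by fun_prop
      simpa using (this.tendsto 0).mono_left nhdsWithin_le_nhds
    have hpi : ∀ᶠ θ : ℝ in nhdsWithin 0 (Set.Ioi 0), θ ∈ Set.Ioo 0 Real.pi :=
      Ioo_mem_nhdsGT Real.pi_pos
    obtain ⟨θ, h1, h2⟩ := ((hc.eventually_lt_const hρ).and hpi).exists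
    exact ⟨θ, h1, (Real.sin_pos_of_mem_Ioo h2).ne'⟩
  have hskew : ∀ K : Matrix m m ℂ, K ∈ skewAdjoint (Matrix m m ℂ) → ℓ K = 0 := by
    intro K hK
    simpa using hphase 1 (by simp) (by simpa using hρ) K hK
  have hI : ∀ K : Matrix m m ℂ, K ∈ skewAdjoint (Matrix m m ℂ) → ℓ (Complex.I • K) = 0 := by
    intro K hK
    have h1 := hphase (Complex.exp (θ * Complex.I)) (by
      rw [RCLike.star_def, ← Complex.normSq_eq_conj_mul_self, Complex.normSq_eq_norm_sq,
        Complex.norm_exp_ofReal_mul_I]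
      simp) hθ1 K hK
    have h2 : Complex.exp (θ * Complex.I) • K = Real.cos θ • K + Real.sin θ • (Complex.I • K) := by
      rw [Complex.exp_mul_I, add_smul, mul_smul, ← Complex.ofReal_cos, ← Complex.ofReal_sin,
        Complex.coe_smul, Complex.coe_smul]
    rw [h2, map_add, map_smul, map_smul, hskew K hK] at h1
    simpa [hθ0] using h1
  refine hℓ (LinearMap.ext fun M => ?_)
  have hM : M = (1 / 2 : ℝ) • (M - Mᴴ) +
      (1 / 2 : ℝ) • (Complex.I • (-(Complex.I • (M + Mᴴ)))) := by
    rw [smul_neg, smul_smul, Complex.I_mul_I]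
    module
  rw [hM, map_add, map_smul, map_smul, hskew, hI]
  · simp
  · rw [skewAdjoint.mem_iff, Matrix.star_eq_conjTranspose]
    simp [add_comm]
  · rw [skewAdjoint.mem_iff, Matrix.star_eq_conjTranspose]
    simp

theorem exists_norm_le_of_trace_unitary_le {ρ : ℝ} (hρ : 0 < ρ) :
    ∃ C : ℝ, 0 ≤ C ∧ ∀ (b : Matrix m m ℂ) (ε : ℝ), 0 ≤ ε →
      (∀ V ∈ Matrix.unitaryGroup m ℂ, ‖V - 1‖ < ρ → |(V * bᴴ).trace.re| ≤ ε) → ‖b‖ ≤ C * ε := by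
  have key : ∀ M : Matrix m m ℂ, ∃ C : ℝ, 0 ≤ C ∧ ∀ (b : Matrix m m ℂ) (ε : ℝ), 0 ≤ ε →
      (∀ V ∈ Matrix.unitaryGroup m ℂ, ‖V - 1‖ < ρ → |(V * bᴴ).trace.re| ≤ ε) →
      |(M * bᴴ).trace.re| ≤ C * ε := by
    intro M
    have hM : M ∈ Submodule.span ℝ {V : Matrix m m ℂ | V ∈ Matrix.unitaryGroup m ℂ ∧
        ‖V - 1‖ < ρ} := by
      rw [span_unitary_near_one_eq_top hρ]; trivial
    induction hM using Submodule.span_induction with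
    | mem V hV => exact ⟨1, zero_le_one, fun b ε _ h => by simpa using h V hV.1 hV.2⟩
    | zero => exact ⟨0, le_rfl, fun b ε _ h => by simp⟩
    | add x y _ _ hx hy =>
      obtain ⟨C, hC, hx⟩ := hx
      obtain ⟨D, hD, hy⟩ := hy
      refine ⟨C + D, by positivity, fun b ε hε h => ?_⟩
      rw [add_mul, Matrix.trace_add, Complex.add_re, add_mul]
      exact (abs_add_le _ _).trans (add_le_add (hx b ε hε h) (hy b ε hε h))
    | smul a x _ hx =>
      obtain ⟨C, hC, hx⟩ := hx
      refine ⟨|a| * C, by positivity, fun b ε hε h => ?_⟩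
      rw [smul_mul_assoc, Matrix.trace_smul, Complex.smul_re, smul_eq_mul, abs_mul, mul_assoc]
      exact mul_le_mul_of_nonneg_left (hx b ε hε h) (abs_nonneg a)
  choose C hC0 hC using key
  let S : m → m → ℝ := fun i j => C (Matrix.single i j 1) + C (Matrix.single i j Complex.I)
  have hS : ∀ i j, 0 ≤ S i j := fun i j => add_nonneg (hC0 _) (hC0 _)
  have hS' : 0 ≤ ∑ i, ∑ j, S i j :=
    Finset.sum_nonneg fun i _ => Finset.sum_nonneg fun j _ => hS i j
  refine ⟨Fintype.card m * ∑ i, ∑ j, S i j, by positivity, fun b ε hε h => ?_⟩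
  have hle : ∀ i j, S i j ≤ ∑ i, ∑ j, S i j := fun i j =>
    (Finset.single_le_sum (f := fun j => S i j) (fun j _ => hS i j) (Finset.mem_univ j)).trans
      (Finset.single_le_sum (f := fun i => ∑ j, S i j)
        (fun i _ => Finset.sum_nonneg fun j _ => hS i j) (Finset.mem_univ i))
  rw [mul_assoc]
  refine frobenius_norm_le_card_mul b (by positivity) fun i j => ?_
  have h1 := hC (Matrix.single i j 1) b ε hε h
  have h2 := hC (Matrix.single i j Complex.I) b ε hε h
  have e : ∀ z : ℂ, (Matrix.single i j z * bᴴ).trace = z * star (b i j) := by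
    intro z
    rw [Matrix.trace_single_mul]
    simp
  rw [e] at h1 h2
  have h3 := Complex.norm_le_abs_re_add_abs_im (b i j)
  simp at h1 h2
  calc ‖b i j‖ ≤ S i j * ε := by
        simp only [S, add_mul]
        linarith
    _ ≤ _ := mul_le_mul_of_nonneg_right (hle i j) hε

section HalfProjection

variable {n : ℕ}

/-- Projections in `M_{2n}(ℂ)` of normalized trace `1/2`. -/
def IsHalfProj (P : Matrix (Fin n ⊕ Fin n) (Fin n ⊕ Fin n) ℂ) : Prop :=
  Pᴴ = P ∧ P * P = P ∧ P.trace = (n : ℂ)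

/-- The projection onto the first summand. -/
def fstProj (n : ℕ) : Matrix (Fin n ⊕ Fin n) (Fin n ⊕ Fin n) ℂ :=
  Matrix.fromBlocks 1 0 0 0

/-- The projection at angle `π/4` from `fstProj n` determined by `V`. -/
noncomputable def diagProj (V : Matrix (Fin n) (Fin n) ℂ) :
    Matrix (Fin n ⊕ Fin n) (Fin n ⊕ Fin n) ℂ :=
  (2 : ℂ)⁻¹ • Matrix.fromBlocks 1 V Vᴴ 1

theorem trace_fromBlocks_eq (A B C D : Matrix (Fin n) (Fin n) ℂ) :
    (Matrix.fromBlocks A B C D).trace = A.trace + D.trace := by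
  simp [Matrix.trace]

theorem isHalfProj_fstProj : IsHalfProj (fstProj n) := by
  refine ⟨?_, ?_, ?_⟩ <;>
    simp [fstProj, Matrix.fromBlocks_conjTranspose, Matrix.fromBlocks_multiply,
      trace_fromBlocks_eq]

theorem isHalfProj_diagProj {V : Matrix (Fin n) (Fin n) ℂ}
    (hV : V ∈ Matrix.unitaryGroup (Fin n) ℂ) : IsHalfProj (diagProj V) := by
  have h1 : V * Vᴴ = 1 := Matrix.mem_unitaryGroup_iff.mp hV
  have h2 : Vᴴ * V = 1 := Matrix.mem_unitaryGroup_iff'.mp hV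
  refine ⟨?_, ?_, ?_⟩
  · simp [diagProj, Matrix.fromBlocks_conjTranspose]
  · simp only [diagProj, smul_mul_smul_comm, Matrix.fromBlocks_multiply, h1, h2, mul_one, one_mul,
      Matrix.fromBlocks_smul]
    congr 1 <;> module
  · simp [diagProj, trace_fromBlocks_eq]
    ring

theorem diagProj_sub_fstProj_mul_self {V : Matrix (Fin n) (Fin n) ℂ}
    (hV : V ∈ Matrix.unitaryGroup (Fin n) ℂ) :
    (diagProj V - fstProj n) * (diagProj V - fstProj n) =
      ((1 / 2 : ℝ) : ℂ) • (1 : Matrix (Fin n ⊕ Fin n) (Fin n ⊕ Fin n) ℂ) := by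
  have h1 : V * Vᴴ = 1 := Matrix.mem_unitaryGroup_iff.mp hV
  have h2 : Vᴴ * V = 1 := Matrix.mem_unitaryGroup_iff'.mp hV
  have e : diagProj V - fstProj n = (2 : ℂ)⁻¹ • Matrix.fromBlocks (-1) V Vᴴ 1 := by
    rw [diagProj, fstProj, Matrix.fromBlocks_smul, Matrix.fromBlocks_smul, sub_eq_add_neg,
      Matrix.fromBlocks_neg, Matrix.fromBlocks_add]
    congr 1
    · module
    · simp
    · simp
    · simp
  rw [e, smul_mul_smul_comm, Matrix.fromBlocks_multiply, h1, h2, ← Matrix.fromBlocks_one,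
    Matrix.fromBlocks_smul, Matrix.fromBlocks_smul]
  push_cast
  congr 1
  · rw [neg_one_mul, neg_neg]; module
  · simp
  · simp
  · rw [one_mul]; module

theorem trace_diagProj_mul {Δ : Matrix (Fin n ⊕ Fin n) (Fin n ⊕ Fin n) ℂ} (hΔ : Δᴴ = Δ)
    (ht : Δ.trace = 0) (V : Matrix (Fin n) (Fin n) ℂ) :
    (diagProj V * Δ).trace.re = (V * Δ.toBlocks₁₂ᴴ).trace.re := by
  have hb : Δ.toBlocks₂₁ = Δ.toBlocks₁₂ᴴ := by
    conv_lhs => rw [← hΔ]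
    rfl
  have hs : (Vᴴ * Δ.toBlocks₁₂).trace.re = (V * Δ.toBlocks₁₂ᴴ).trace.re := by
    have h := Matrix.trace_conjTranspose (V * Δ.toBlocks₁₂ᴴ)
    rw [Matrix.conjTranspose_mul, Matrix.conjTranspose_conjTranspose, Matrix.trace_mul_comm] at h
    rw [h, RCLike.star_def, Complex.conj_re]
  have ht' : (Δ.toBlocks₁₁).trace + (Δ.toBlocks₂₂).trace = 0 := by
    rw [← ht]
    conv_rhs => rw [← Matrix.fromBlocks_toBlocks Δ, trace_fromBlocks_eq]
  conv_lhs => rw [← Matrix.fromBlocks_toBlocks Δ]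
  rw [diagProj, smul_mul_assoc, Matrix.fromBlocks_multiply, Matrix.trace_smul,
    trace_fromBlocks_eq, hb, one_mul, one_mul, Matrix.trace_add, Matrix.trace_add]
  have e : Δ.toBlocks₁₁.trace + (V * Δ.toBlocks₁₂ᴴ).trace +
      ((Vᴴ * Δ.toBlocks₁₂).trace + Δ.toBlocks₂₂.trace) =
      (V * Δ.toBlocks₁₂ᴴ).trace + (Vᴴ * Δ.toBlocks₁₂).trace := by
    linear_combination ht'
  rw [e, smul_eq_mul, ← Complex.ofReal_ofNat, ← Complex.ofReal_inv, Complex.re_ofReal_mul,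
    Complex.add_re, hs]
  ring

theorem IsHalfProj.isHermitian_sub {P Q : Matrix (Fin n ⊕ Fin n) (Fin n ⊕ Fin n) ℂ}
    (hP : IsHalfProj P) (hQ : IsHalfProj Q) : (P - Q)ᴴ = P - Q := by
  rw [Matrix.conjTranspose_sub, hP.1, hQ.1]

theorem IsHalfProj.norm_le {P : Matrix (Fin n ⊕ Fin n) (Fin n ⊕ Fin n) ℂ}
    (hP : IsHalfProj P) : ‖P‖ ≤ n + 1 := by
  have h := frobenius_norm_sq_eq P
  rw [hP.1, hP.2.1, hP.2.2, Complex.natCast_re] at h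
  nlinarith [norm_nonneg P]

theorem frobenius_norm_offDiag_le (b c : Matrix (Fin n) (Fin n) ℂ) :
    ‖Matrix.fromBlocks 0 b c 0‖ ≤ ‖b‖ + ‖c‖ := by
  have e : Matrix.fromBlocks 0 b c 0 = Matrix.fromBlocks 0 b 0 0 + Matrix.fromBlocks 0 0 c 0 := by
    simp [Matrix.fromBlocks_add]
  rw [e]
  refine (norm_add_le _ _).trans (le_of_eq ?_)
  congr 1 <;> simp [Matrix.frobenius_norm_def]

/-- A difference of projections near `fstProj n` is controlled by its off-diagonal block. -/
theorem norm_sub_le_of_near_fstProj {Q R : Matrix (Fin n ⊕ Fin n) (Fin n ⊕ Fin n) ℂ}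
    (hQ : IsHalfProj Q) (hR : IsHalfProj R) {δ : ℝ} (hQδ : ‖Q - fstProj n‖ ≤ δ)
    (hRδ : ‖R - fstProj n‖ ≤ δ) :
    ‖R - Q‖ ≤ 2 * ‖(R - Q).toBlocks₁₂‖ + (4 * n + 6) * δ * ‖R - Q‖ := by
  set Δ := R - Q with hΔ
  set E := fstProj n with hE
  have hherm : Δᴴ = Δ := hR.isHermitian_sub hQ
  have hb : Δ.toBlocks₂₁ = Δ.toBlocks₁₂ᴴ := by
    conv_lhs => rw [← hherm]
    rfl
  have h1 : Δ - E * Δ - Δ * E = (R - E) * Δ + Δ * (Q - E) := by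
    have : Δ = R * Δ + Δ * Q := by
      rw [hΔ, mul_sub, sub_mul, hR.2.1, hQ.2.1]; abel
    calc Δ - E * Δ - Δ * E = (R * Δ + Δ * Q) - E * Δ - Δ * E :=
          congrArg (· - E * Δ - Δ * E) this
      _ = _ := by rw [sub_mul R E Δ, mul_sub Δ Q E]; abel
  have h2 : ‖Δ - E * Δ - Δ * E‖ ≤ 2 * δ * ‖Δ‖ := by
    rw [h1]
    calc _ ≤ ‖R - E‖ * ‖Δ‖ + ‖Δ‖ * ‖Q - E‖ :=
          (norm_add_le _ _).trans (add_le_add (norm_mul_le _ _) (norm_mul_le _ _))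
      _ ≤ δ * ‖Δ‖ + ‖Δ‖ * δ := by gcongr
      _ = _ := by ring
  have h3 : Δ = Matrix.fromBlocks 0 Δ.toBlocks₁₂ Δ.toBlocks₁₂ᴴ 0 +
      ((Δ - E * Δ - Δ * E) - (2 : ℂ) • (E * (Δ - E * Δ - Δ * E))) := by
    rw [← hb, hE, fstProj]
    conv_lhs => rw [← Matrix.fromBlocks_toBlocks Δ]
    conv_rhs => rw [← Matrix.fromBlocks_toBlocks Δ]
    simp only [Matrix.fromBlocks_multiply, Matrix.fromBlocks_smul, Matrix.fromBlocks_add,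
      sub_eq_add_neg, Matrix.fromBlocks_neg, Matrix.toBlocks_fromBlocks₁₂,
      Matrix.toBlocks_fromBlocks₂₁]
    congr 1
    · simp; module
    · simp
    · simp
    · simp
  have hE1 : ‖E‖ ≤ n + 1 := isHalfProj_fstProj.norm_le
  set G := Δ - E * Δ - Δ * E
  have h4 : ‖(2 : ℂ) • (E * G)‖ ≤ 2 * ((n + 1) * ‖G‖) := by
    rw [norm_smul]
    simp only [Complex.norm_ofNat]
    gcongr
    exact (norm_mul_le _ _).trans (by gcongr)
  calc ‖Δ‖ ≤ ‖Matrix.fromBlocks 0 Δ.toBlocks₁₂ Δ.toBlocks₁₂ᴴ 0‖ + (‖G‖ + ‖(2 : ℂ) • (E * G)‖) := by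
        conv_lhs => rw [h3]
        exact (norm_add_le _ _).trans (add_le_add le_rfl (norm_sub_le _ _))
    _ ≤ (‖Δ.toBlocks₁₂‖ + ‖Δ.toBlocks₁₂ᴴ‖) + (‖G‖ + 2 * ((n + 1) * ‖G‖)) := by
        gcongr
        exact frobenius_norm_offDiag_le _ _
    _ = 2 * ‖Δ.toBlocks₁₂‖ + (2 * n + 3) * ‖G‖ := by
        rw [Matrix.frobenius_norm_conjTranspose]; ring
    _ ≤ _ := by
        have h5 := mul_le_mul_of_nonneg_left h2 (by positivity : (0 : ℝ) ≤ 2 * n + 3)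
        linarith

/-- Projections near `fstProj n` are determined by their `L^p`-distances to the projections
`diagProj V` with `V` near `1`. -/
theorem exists_eq_of_lpSum_eq (hn : 1 ≤ n) {p : ℝ} (hp : 0 < p) {ρ : ℝ} (hρ : 0 < ρ) :
    ∃ δ > 0, ∀ Q R : Matrix (Fin n ⊕ Fin n) (Fin n ⊕ Fin n) ℂ, IsHalfProj Q → IsHalfProj R →
      ‖Q - fstProj n‖ < δ → ‖R - fstProj n‖ < δ →
      (∀ V ∈ Matrix.unitaryGroup (Fin n) ℂ, ‖V - 1‖ < ρ →
        lpSum p (diagProj V - Q) = lpSum p (diagProj V - R)) → R = Q := by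
  obtain ⟨C, hC0, hC⟩ := exists_norm_le_of_trace_unitary_le (m := Fin n) hρ
  set c : ℝ := p / 2 * (1 / 2 : ℝ) ^ (p / 2 - 1) with hc
  have hcpos : 0 < c := by positivity
  have hderiv : HasStrictDerivAt (fun x : ℝ => x ^ (p / 2)) c (1 / 2) :=
    Real.hasStrictDerivAt_rpow_const_of_ne (by norm_num) _
  set N : ℝ := (Fintype.card (Fin n ⊕ Fin n) : ℝ) with hN
  have hNpos : 0 < N := by
    rw [hN, Fintype.card_sum, Fintype.card_fin]
    exact_mod_cast (by omega : 0 < n + n)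
  -- Lipschitz constant of `X ↦ X * X` on differences of projections
  set M : ℝ := 4 * ((n : ℝ) + 1) with hM
  have hMpos : 0 < M := by positivity
  set η : ℝ := c / (4 * (N ^ 4 * M) * (C + 1)) with hη
  have hηpos : 0 < η := by positivity
  obtain ⟨r, hrpos, hr⟩ : ∃ r > 0, ∀ x y : ℝ, |x - 1 / 2| < r → |y - 1 / 2| < r →
      |(x ^ (p / 2) - c * x) - (y ^ (p / 2) - c * y)| ≤ η * |x - y| := by
    have h := hderiv.isLittleO.def hηpos
    rw [nhds_prod_eq, Metric.nhds_basis_ball.prod_self.eventually_iff] at h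
    obtain ⟨r, hr, h⟩ := h
    refine ⟨r, hr, fun x y hx hy => ?_⟩
    have := @h (x, y) ⟨by simpa [Real.dist_eq] using hx, by simpa [Real.dist_eq] using hy⟩
    simp only [Real.norm_eq_abs, ContinuousLinearMap.toSpanSingleton_apply, smul_eq_mul] at this
    convert this using 2
    ring
  refine ⟨min (r / (N ^ 2 * M)) (1 / (4 * (4 * n + 6))), by positivity,
    fun Q R hQ hR hQδ hRδ h => ?_⟩
  have hmul : ∀ {P A B : Matrix (Fin n ⊕ Fin n) (Fin n ⊕ Fin n) ℂ}, IsHalfProj P →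
      IsHalfProj A → IsHalfProj B →
      ‖(P - A) * (P - A) - (P - B) * (P - B)‖ ≤ M * ‖A - B‖ := by
    intro P A B hP hA hB
    have e : (P - A) * (P - A) - (P - B) * (P - B) =
        -((P - A) * (A - B)) - (A - B) * (P - B) := by noncomm_ring
    have hPA : ‖P - A‖ ≤ 2 * (n + 1) := by
      have := norm_sub_le P A
      linarith [hP.norm_le, hA.norm_le]
    have hPB : ‖P - B‖ ≤ 2 * (n + 1) := by
      have := norm_sub_le P B
      linarith [hP.norm_le, hB.norm_le]
    rw [e]
    calc _ ≤ ‖(P - A) * (A - B)‖ + ‖(A - B) * (P - B)‖ := by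
          simpa only [norm_neg] using norm_sub_le (-((P - A) * (A - B))) ((A - B) * (P - B))
      _ ≤ ‖P - A‖ * ‖A - B‖ + ‖A - B‖ * ‖P - B‖ := add_le_add (norm_mul_le _ _) (norm_mul_le _ _)
      _ ≤ 2 * (n + 1) * ‖A - B‖ + ‖A - B‖ * (2 * (n + 1)) := by gcongr
      _ = _ := by rw [hM]; ring
  have hnear : ∀ {V : Matrix (Fin n) (Fin n) ℂ}, V ∈ Matrix.unitaryGroup (Fin n) ℂ →
      ∀ {A : Matrix (Fin n ⊕ Fin n) (Fin n ⊕ Fin n) ℂ}, IsHalfProj A →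
      ‖A - fstProj n‖ < r / (N ^ 2 * M) → ∀ i,
      |(Matrix.posSemidef_conjTranspose_mul_self (diagProj V - A)).isHermitian.eigenvalues i
        - 1 / 2| < r := by
    intro V hV A hA hAr i
    refine (abs_eigenvalues_sub_le _ _ i).trans_lt ?_
    rw [(isHalfProj_diagProj hV).isHermitian_sub hA, ← diagProj_sub_fstProj_mul_self hV]
    calc _ ≤ N ^ 2 * (M * ‖A - fstProj n‖) := by
          rw [← hN]; gcongr
          exact hmul (isHalfProj_diagProj hV) hA isHalfProj_fstProj
      _ < N ^ 2 * (M * (r / (N ^ 2 * M))) := by gcongr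
      _ = r := by field_simp
  set Δ := R - Q with hΔ
  have hΔt : Δ.trace = 0 := by rw [hΔ, Matrix.trace_sub, hR.2.2, hQ.2.2, sub_self]
  have hmain : ∀ V ∈ Matrix.unitaryGroup (Fin n) ℂ, ‖V - 1‖ < ρ →
      |(V * Δ.toBlocks₁₂ᴴ).trace.re| ≤ η * (N ^ 4 * M) / (2 * c) * ‖Δ‖ := by
    intro V hV hVρ
    rw [← trace_diagProj_mul (hR.isHermitian_sub hQ) hΔt]
    have hX := (Matrix.posSemidef_conjTranspose_mul_self (diagProj V - R)).isHermitian
    have hY := (Matrix.posSemidef_conjTranspose_mul_self (diagProj V - Q)).isHermitian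
    have hP := isHalfProj_diagProj hV
    have h1 := abs_sum_eigenvalues_sub_le hX hY (fun x => x ^ (p / 2) - c * x) hηpos.le
      (fun i j => hr _ _ (hnear hV hR (hRδ.trans_le (min_le_left _ _)) i)
        (hnear hV hQ (hQδ.trans_le (min_le_left _ _)) j))
    have h2 := h V hV hVρ
    unfold lpSum at h2
    simp only [Finset.sum_sub_distrib, ← Finset.mul_sum] at h1
    rw [← h2] at h1
    have htX : ∑ i, hX.eigenvalues i = ((diagProj V - R) * (diagProj V - R)).trace.re := by
      rw [sum_eigenvalues_conjTranspose_mul_self, frobenius_norm_sq_eq, hP.isHermitian_sub hR]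
    have htY : ∑ i, hY.eigenvalues i = ((diagProj V - Q) * (diagProj V - Q)).trace.re := by
      rw [sum_eigenvalues_conjTranspose_mul_self, frobenius_norm_sq_eq, hP.isHermitian_sub hQ]
    have hdiff : ((diagProj V - R) * (diagProj V - R)).trace -
        ((diagProj V - Q) * (diagProj V - Q)).trace = -2 * (diagProj V * Δ).trace := by
      simp only [sub_mul, mul_sub, hP.2.1, hQ.2.1, hR.2.1, Matrix.trace_sub, hΔ, hP.2.2, hQ.2.2,
        hR.2.2]
      rw [Matrix.trace_mul_comm R, Matrix.trace_mul_comm Q]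
      ring
    have hdiff' := congrArg Complex.re hdiff
    rw [Complex.sub_re, ← htX, ← htY] at hdiff'
    simp only [Complex.mul_re, Complex.neg_re, Complex.neg_im, Complex.re_ofNat,
      Complex.im_ofNat] at hdiff'
    have h3 : ∑ i, hY.eigenvalues i ^ (p / 2) - c * ∑ i, hX.eigenvalues i -
        (∑ i, hY.eigenvalues i ^ (p / 2) - c * ∑ i, hY.eigenvalues i) =
        2 * c * (diagProj V * Δ).trace.re := by
      linear_combination (-c) * hdiff'
    rw [h3, abs_mul, abs_of_pos (by positivity : 0 < 2 * c), hP.isHermitian_sub hR,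
      hP.isHermitian_sub hQ] at h1
    rw [div_mul_eq_mul_div, le_div_iff₀ (by positivity)]
    calc _ = 2 * c * |(diagProj V * Δ).trace.re| := by ring
      _ ≤ η * (N ^ 4 * (M * ‖Δ‖)) := h1.trans (by gcongr; exact hmul hP hR hQ)
      _ = _ := by ring
  have hb := hC Δ.toBlocks₁₂ _ (by positivity) hmain
  have hΔle := norm_sub_le_of_near_fstProj hQ hR (hQδ.le.trans (min_le_right _ _))
    (hRδ.le.trans (min_le_right _ _))
  rw [← hΔ] at hΔle
  have e1 : (4 * (n : ℝ) + 6) * (1 / (4 * (4 * n + 6))) = 1 / 4 := by field_simp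
  rw [e1] at hΔle
  have e2 : η * (N ^ 4 * M) / (2 * c) = 1 / (8 * (C + 1)) := by
    rw [hη]; field_simp; norm_num
  rw [e2] at hb
  have e3 : C * (1 / (8 * (C + 1)) * ‖Δ‖) ≤ 1 / 8 * ‖Δ‖ := by
    rw [← mul_assoc]
    gcongr
    rw [mul_one_div, div_le_div_iff₀ (by positivity) (by positivity)]
    linarith
  have : ‖Δ‖ = 0 := by linarith [norm_nonneg Δ]
  exact sub_eq_zero.mp (norm_eq_zero.mp this)

theorem IsHalfProj.unitary_conj {P g : Matrix (Fin n ⊕ Fin n) (Fin n ⊕ Fin n) ℂ}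
    (hP : IsHalfProj P) (hg : g ∈ Matrix.unitaryGroup (Fin n ⊕ Fin n) ℂ) :
    IsHalfProj (g * P * gᴴ) := by
  have h : gᴴ * g = 1 := Matrix.mem_unitaryGroup_iff'.mp hg
  refine ⟨?_, ?_, ?_⟩
  · simp only [Matrix.conjTranspose_mul, Matrix.conjTranspose_conjTranspose, hP.1, mul_assoc]
  · calc g * P * gᴴ * (g * P * gᴴ) = g * P * (gᴴ * g) * P * gᴴ := by noncomm_ring
      _ = g * (P * P) * gᴴ := by rw [h]; noncomm_ring
      _ = _ := by rw [hP.2.1]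
  · rw [Matrix.trace_mul_comm, ← mul_assoc, h, one_mul, hP.2.2]

/-- `φ` maps projections of normalized trace `1/2` to such projections and preserves their
`L^p`-distances. -/
def IsLpIsometry (p : ℝ) (φ : Matrix (Fin n ⊕ Fin n) (Fin n ⊕ Fin n) ℂ →
    Matrix (Fin n ⊕ Fin n) (Fin n ⊕ Fin n) ℂ) : Prop :=
  (∀ P, IsHalfProj P → IsHalfProj (φ P)) ∧
    ∀ P Q, IsHalfProj P → IsHalfProj Q → lpnorm p (φ P - φ Q) = lpnorm p (P - Q)

/-- `φ` fixes `fstProj n` and all projections `diagProj V`. -/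
def FixesFrame (φ : Matrix (Fin n ⊕ Fin n) (Fin n ⊕ Fin n) ℂ →
    Matrix (Fin n ⊕ Fin n) (Fin n ⊕ Fin n) ℂ) : Prop :=
  φ (fstProj n) = fstProj n ∧
    ∀ V ∈ Matrix.unitaryGroup (Fin n) ℂ, φ (diagProj V) = diagProj V

/-- The conjugate of a map on matrices by the inner automorphism of `g`. -/
def conjMap (g : Matrix (Fin n ⊕ Fin n) (Fin n ⊕ Fin n) ℂ)
    (φ : Matrix (Fin n ⊕ Fin n) (Fin n ⊕ Fin n) ℂ →
      Matrix (Fin n ⊕ Fin n) (Fin n ⊕ Fin n) ℂ) :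
    Matrix (Fin n ⊕ Fin n) (Fin n ⊕ Fin n) ℂ → Matrix (Fin n ⊕ Fin n) (Fin n ⊕ Fin n) ℂ :=
  fun P => gᴴ * φ (g * P * gᴴ) * g

theorem conjMap_mul (g h : Matrix (Fin n ⊕ Fin n) (Fin n ⊕ Fin n) ℂ)
    (φ : Matrix (Fin n ⊕ Fin n) (Fin n ⊕ Fin n) ℂ →
      Matrix (Fin n ⊕ Fin n) (Fin n ⊕ Fin n) ℂ) :
    conjMap (g * h) φ = conjMap h (conjMap g φ) := by
  funext P
  simp only [conjMap, Matrix.conjTranspose_mul, mul_assoc]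

theorem conjMap_eq_self_iff {g : Matrix (Fin n ⊕ Fin n) (Fin n ⊕ Fin n) ℂ}
    (hg : g ∈ Matrix.unitaryGroup (Fin n ⊕ Fin n) ℂ)
    (φ : Matrix (Fin n ⊕ Fin n) (Fin n ⊕ Fin n) ℂ →
      Matrix (Fin n ⊕ Fin n) (Fin n ⊕ Fin n) ℂ)
    (P : Matrix (Fin n ⊕ Fin n) (Fin n ⊕ Fin n) ℂ) :
    conjMap g φ P = P ↔ φ (g * P * gᴴ) = g * P * gᴴ := by
  have h1 : g * gᴴ = 1 := Matrix.mem_unitaryGroup_iff.mp hg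
  have h2 : gᴴ * g = 1 := Matrix.mem_unitaryGroup_iff'.mp hg
  constructor
  · intro h
    conv_rhs => rw [← h, conjMap]
    calc _ = 1 * φ (g * P * gᴴ) * 1 := by rw [one_mul, mul_one]
      _ = (g * gᴴ) * φ (g * P * gᴴ) * (g * gᴴ) := by rw [h1]
      _ = _ := by noncomm_ring
  · intro h
    rw [conjMap, h]
    calc _ = (gᴴ * g) * P * (gᴴ * g) := by noncomm_ring
      _ = P := by rw [h2, one_mul, mul_one]

theorem IsLpIsometry.conjMap {p : ℝ} {φ : Matrix (Fin n ⊕ Fin n) (Fin n ⊕ Fin n) ℂ →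
      Matrix (Fin n ⊕ Fin n) (Fin n ⊕ Fin n) ℂ} (hφ : IsLpIsometry p φ)
    {g : Matrix (Fin n ⊕ Fin n) (Fin n ⊕ Fin n) ℂ}
    (hg : g ∈ Matrix.unitaryGroup (Fin n ⊕ Fin n) ℂ) : IsLpIsometry p (conjMap g φ) := by
  have hg' : gᴴ ∈ Matrix.unitaryGroup (Fin n ⊕ Fin n) ℂ := Unitary.star_mem hg
  refine ⟨fun P hP => ?_, fun P Q hP hQ => ?_⟩
  · have h := (hφ.1 _ (hP.unitary_conj hg)).unitary_conj hg'
    rwa [Matrix.conjTranspose_conjTranspose] at h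
  · have e : _root_.conjMap g φ P - _root_.conjMap g φ Q =
        gᴴ * (φ (g * P * gᴴ) - φ (g * Q * gᴴ)) * g := by
      simp only [_root_.conjMap]; noncomm_ring
    have e' : g * P * gᴴ - g * Q * gᴴ = gᴴᴴ * (P - Q) * gᴴ := by
      rw [Matrix.conjTranspose_conjTranspose]; noncomm_ring
    rw [e, lpnorm_unitary_conj p hg, hφ.2 _ _ (hP.unitary_conj hg) (hQ.unitary_conj hg), e',
      lpnorm_unitary_conj p hg']

/-- An `L^p`-isometry fixing `fstProj n` and the `diagProj V` with `V` near `1` is the identity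
near `fstProj n`, with a uniform radius. -/
theorem exists_fixes_ball_fstProj (hn : 1 ≤ n) {p : ℝ} (hp : 0 < p) {ρ : ℝ} (hρ : 0 < ρ) :
    ∃ δ > 0, ∀ φ : Matrix (Fin n ⊕ Fin n) (Fin n ⊕ Fin n) ℂ →
      Matrix (Fin n ⊕ Fin n) (Fin n ⊕ Fin n) ℂ, IsLpIsometry p φ → φ (fstProj n) = fstProj n →
      (∀ V ∈ Matrix.unitaryGroup (Fin n) ℂ, ‖V - 1‖ < ρ → φ (diagProj V) = diagProj V) →
      ∀ Q, IsHalfProj Q → ‖Q - fstProj n‖ < δ → φ Q = Q := by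
  have : Nonempty (Fin n ⊕ Fin n) := ⟨Sum.inl ⟨0, hn⟩⟩
  obtain ⟨δ, hδ, h⟩ := exists_eq_of_lpSum_eq hn hp hρ
  obtain ⟨δ', hδ', h'⟩ := exists_norm_lt_of_lpSum_eq (m := Fin n ⊕ Fin n) hp hδ
  refine ⟨min δ δ', lt_min hδ hδ', fun φ hφ hE hV Q hQ hQδ => ?_⟩
  refine h Q (φ Q) hQ (hφ.1 Q hQ) (hQδ.trans_le (min_le_left _ _)) ?_ fun V hVu hVρ => ?_
  · refine h' (Q - fstProj n) _ ?_ (hQδ.trans_le (min_le_right _ _))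
    refine lpSum_eq_of_lpnorm_eq hp ?_
    rw [← hφ.2 Q (fstProj n) hQ isHalfProj_fstProj, hE]
  · refine lpSum_eq_of_lpnorm_eq hp ?_
    rw [← hφ.2 (diagProj V) Q (isHalfProj_diagProj hVu) hQ, hV V hVu hVρ]

/-- A unitary carrying `fstProj n` to `diagProj V` and `diagProj 1` to `fstProj n`. -/
noncomputable def swapUnitary (V : Matrix (Fin n) (Fin n) ℂ) :
    Matrix (Fin n ⊕ Fin n) (Fin n ⊕ Fin n) ℂ :=
  ((Real.sqrt 2)⁻¹ : ℂ) • Matrix.fromBlocks V V 1 (-1)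

theorem inv_sqrt_two_mul_self : ((Real.sqrt 2)⁻¹ : ℂ) * ((Real.sqrt 2)⁻¹ : ℂ) = 2⁻¹ := by
  rw [← mul_inv, ← Complex.ofReal_mul, Real.mul_self_sqrt (by norm_num)]
  norm_num

theorem conjTranspose_swapUnitary (V : Matrix (Fin n) (Fin n) ℂ) :
    (swapUnitary V)ᴴ = ((Real.sqrt 2)⁻¹ : ℂ) • Matrix.fromBlocks Vᴴ 1 Vᴴ (-1) := by
  simp [swapUnitary, Matrix.fromBlocks_conjTranspose, Matrix.conjTranspose_smul]

theorem swapUnitary_mem {V : Matrix (Fin n) (Fin n) ℂ}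
    (hV : V ∈ Matrix.unitaryGroup (Fin n) ℂ) :
    swapUnitary V ∈ Matrix.unitaryGroup (Fin n ⊕ Fin n) ℂ := by
  have h1 : V * Vᴴ = 1 := Matrix.mem_unitaryGroup_iff.mp hV
  rw [Matrix.mem_unitaryGroup_iff, Matrix.star_eq_conjTranspose, conjTranspose_swapUnitary,
    swapUnitary, smul_mul_smul_comm, inv_sqrt_two_mul_self, Matrix.fromBlocks_multiply, h1,
    Matrix.fromBlocks_smul, ← Matrix.fromBlocks_one]
  congr 1
  · module
  · simp
  · simp
  · simp only [mul_one, neg_mul_neg]; module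

theorem swapUnitary_conj_fstProj {V : Matrix (Fin n) (Fin n) ℂ}
    (hV : V ∈ Matrix.unitaryGroup (Fin n) ℂ) :
    swapUnitary V * fstProj n * (swapUnitary V)ᴴ = diagProj V := by
  have h1 : V * Vᴴ = 1 := Matrix.mem_unitaryGroup_iff.mp hV
  rw [conjTranspose_swapUnitary, swapUnitary, fstProj, smul_mul_assoc, smul_mul_smul_comm,
    inv_sqrt_two_mul_self, Matrix.fromBlocks_multiply, Matrix.fromBlocks_multiply, diagProj]
  simp [h1]

theorem swapUnitary_conj_diagProj_one {V : Matrix (Fin n) (Fin n) ℂ}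
    (hV : V ∈ Matrix.unitaryGroup (Fin n) ℂ) :
    swapUnitary V * diagProj 1 * (swapUnitary V)ᴴ = fstProj n := by
  have h1 : V * Vᴴ = 1 := Matrix.mem_unitaryGroup_iff.mp hV
  rw [conjTranspose_swapUnitary, swapUnitary, fstProj, diagProj, smul_mul_smul_comm,
    smul_mul_smul_comm, mul_right_comm, inv_sqrt_two_mul_self, Matrix.fromBlocks_multiply,
    Matrix.fromBlocks_multiply, Matrix.fromBlocks_smul]
  congr 1
  · simp only [Matrix.conjTranspose_one, mul_one, add_mul, h1]; module
  · simp
  · simp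
  · simp

theorem norm_diagProj_sub_le (V W : Matrix (Fin n) (Fin n) ℂ) :
    ‖diagProj V - diagProj W‖ ≤ ‖V - W‖ := by
  have e : diagProj V - diagProj W =
      (2 : ℂ)⁻¹ • Matrix.fromBlocks 0 (V - W) (V - W)ᴴ 0 := by
    rw [diagProj, diagProj, ← smul_sub, sub_eq_add_neg, Matrix.fromBlocks_neg,
      Matrix.fromBlocks_add]
    simp [sub_eq_add_neg]
  rw [e, norm_smul]
  have h := frobenius_norm_offDiag_le (V - W) (V - W)ᴴ
  rw [Matrix.frobenius_norm_conjTranspose] at h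
  simp only [norm_inv, Complex.norm_ofNat]
  linarith

theorem norm_unitary_conj_sub_le {g P : Matrix (Fin n ⊕ Fin n) (Fin n ⊕ Fin n) ℂ}
    (hg : g ∈ Matrix.unitaryGroup (Fin n ⊕ Fin n) ℂ) (hP : IsHalfProj P) :
    ‖g * P * gᴴ - P‖ ≤
      (n + 1) * (Fintype.card (Fin n ⊕ Fin n) + 1) * ‖g - 1‖ := by
  have hg' : gᴴ ∈ Matrix.unitaryGroup (Fin n ⊕ Fin n) ℂ := Unitary.star_mem hg
  have e : g * P * gᴴ - P = (g - 1) * P * gᴴ + P * (g - 1)ᴴ := by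
    rw [Matrix.conjTranspose_sub, Matrix.conjTranspose_one]; noncomm_ring
  rw [e]
  calc _ ≤ ‖g - 1‖ * ‖P‖ * ‖gᴴ‖ + ‖P‖ * ‖(g - 1)ᴴ‖ :=
        (norm_add_le _ _).trans (add_le_add norm_mul₃_le (norm_mul_le _ _))
    _ ≤ ‖g - 1‖ * (n + 1) * Fintype.card (Fin n ⊕ Fin n) + (n + 1) * ‖g - 1‖ := by
        rw [Matrix.frobenius_norm_conjTranspose (g - 1)]
        gcongr
        · exact hP.norm_le
        · exact frobenius_norm_unitary_le hg'
        · exact hP.norm_le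
    _ = _ := by ring

/-- The isometries fixing the frame are stable under conjugation by unitaries near `1`. -/
theorem exists_fixesFrame_conjMap (hn : 1 ≤ n) {p : ℝ} (hp : 0 < p) :
    ∃ η > 0, ∀ φ : Matrix (Fin n ⊕ Fin n) (Fin n ⊕ Fin n) ℂ →
      Matrix (Fin n ⊕ Fin n) (Fin n ⊕ Fin n) ℂ, IsLpIsometry p φ → FixesFrame φ →
      ∀ g ∈ Matrix.unitaryGroup (Fin n ⊕ Fin n) ℂ, ‖g - 1‖ < η → FixesFrame (conjMap g φ) := by
  obtain ⟨δ₁, hδ₁, hball₁⟩ := exists_fixes_ball_fstProj hn hp zero_lt_one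
  set N : ℝ := (Fintype.card (Fin n ⊕ Fin n) : ℝ) with hN
  have hNpos : 0 < N := by
    rw [hN, Fintype.card_sum, Fintype.card_fin]
    exact_mod_cast (by omega : 0 < n + n)
  obtain ⟨δ₂, hδ₂, hball₂⟩ := exists_fixes_ball_fstProj hn hp
    (ρ := δ₁ / N ^ 2) (by positivity)
  set D : ℝ := (n + 1) * (N + 1) with hD
  have hDpos : 0 < D := by positivity
  refine ⟨min (δ₁ / D) (δ₂ / N ^ 2 / D), by positivity, fun φ hφ hfix g hg hgη => ?_⟩
  have hE : ∀ Q, IsHalfProj Q → ‖Q - fstProj n‖ < δ₁ → φ Q = Q :=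
    hball₁ φ hφ hfix.1 fun V hV _ => hfix.2 V hV
  have hdiag : ∀ V ∈ Matrix.unitaryGroup (Fin n) ℂ, ∀ Q, IsHalfProj Q →
      ‖Q - diagProj V‖ < δ₂ / N ^ 2 → φ Q = Q := by
    intro V hV Q hQ hQV
    have hu := swapUnitary_mem hV
    have hu' : (swapUnitary V)ᴴ ∈ Matrix.unitaryGroup (Fin n ⊕ Fin n) ℂ := Unitary.star_mem hu
    have h1 : swapUnitary V * (swapUnitary V)ᴴ = 1 := Matrix.mem_unitaryGroup_iff.mp hu
    have h2 : (swapUnitary V)ᴴ * swapUnitary V = 1 := Matrix.mem_unitaryGroup_iff'.mp hu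
    set u := swapUnitary V
    have key := hball₂ (conjMap u φ) (hφ.conjMap hu) ?_ ?_ (uᴴ * Q * u) ?_ ?_
    · rw [conjMap_eq_self_iff hu] at key
      have e : u * (uᴴ * Q * u) * uᴴ = Q := by
        calc _ = (u * uᴴ) * Q * (u * uᴴ) := by noncomm_ring
          _ = Q := by rw [h1, one_mul, mul_one]
      rwa [e] at key
    · rw [conjMap_eq_self_iff hu, swapUnitary_conj_fstProj hV]
      exact hfix.2 V hV
    · intro W hW hWρ
      rw [conjMap_eq_self_iff hu]
      refine hE _ ((isHalfProj_diagProj hW).unitary_conj hu) ?_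
      rw [← swapUnitary_conj_diagProj_one hV, ← sub_mul, ← mul_sub]
      calc _ ≤ N ^ 2 * ‖diagProj W - diagProj 1‖ := frobenius_norm_unitary_mul_mul_le hu hu' _
        _ ≤ N ^ 2 * ‖W - 1‖ := by gcongr; exact norm_diagProj_sub_le _ _
        _ < N ^ 2 * (δ₁ / N ^ 2) := by gcongr
        _ = δ₁ := by field_simp
    · have := hQ.unitary_conj hu'
      rwa [Matrix.conjTranspose_conjTranspose] at this
    · have e : fstProj n = uᴴ * diagProj V * u := by
        rw [← swapUnitary_conj_fstProj hV]
        calc _ = 1 * fstProj n * 1 := by rw [one_mul, mul_one]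
          _ = (uᴴ * u) * fstProj n * (uᴴ * u) := by rw [h2]
          _ = _ := by noncomm_ring
      rw [e, ← sub_mul, ← mul_sub]
      calc _ ≤ N ^ 2 * ‖Q - diagProj V‖ := frobenius_norm_unitary_mul_mul_le hu' hu _
        _ < N ^ 2 * (δ₂ / N ^ 2) := by gcongr
        _ = δ₂ := by field_simp
  constructor
  · rw [conjMap_eq_self_iff hg]
    refine hE _ (isHalfProj_fstProj.unitary_conj hg)
      ((norm_unitary_conj_sub_le hg isHalfProj_fstProj).trans_lt ?_)
    calc D * ‖g - 1‖ < D * (δ₁ / D) := by gcongr; exact hgη.trans_le (min_le_left _ _)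
      _ = δ₁ := by field_simp
  · intro V hV
    rw [conjMap_eq_self_iff hg]
    refine hdiag V hV _ ((isHalfProj_diagProj hV).unitary_conj hg)
      ((norm_unitary_conj_sub_le hg (isHalfProj_diagProj hV)).trans_lt ?_)
    calc D * ‖g - 1‖ < D * (δ₂ / N ^ 2 / D) := by gcongr; exact hgη.trans_le (min_le_right _ _)
      _ = δ₂ / N ^ 2 := by field_simp

theorem fixesFrame_conjMap_exp (hn : 1 ≤ n) {p : ℝ} (hp : 0 < p)
    {φ : Matrix (Fin n ⊕ Fin n) (Fin n ⊕ Fin n) ℂ → Matrix (Fin n ⊕ Fin n) (Fin n ⊕ Fin n) ℂ}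
    (hφ : IsLpIsometry p φ) (hfix : FixesFrame φ)
    {K : Matrix (Fin n ⊕ Fin n) (Fin n ⊕ Fin n) ℂ}
    (hK : K ∈ skewAdjoint (Matrix (Fin n ⊕ Fin n) (Fin n ⊕ Fin n) ℂ)) :
    FixesFrame (conjMap (NormedSpace.exp K) φ) := by
  obtain ⟨η, hη, h⟩ := exists_fixesFrame_conjMap hn hp
  have hu : ∀ t : ℝ, NormedSpace.exp (t • K) ∈ Matrix.unitaryGroup (Fin n ⊕ Fin n) ℂ :=
    fun t => NormedSpace.exp_mem_unitary_of_mem_skewAdjoint (skewAdjoint.smul_mem t hK)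
  have hsmall : ∃ k : ℕ, ‖NormedSpace.exp ((1 / ((k : ℝ) + 1)) • K) - 1‖ < η := by
    have hcont : Continuous (fun t : ℝ => NormedSpace.exp (t • K)) :=
      continuous_iff_continuousAt.mpr fun t =>
        (hasDerivAt_exp_smul_const (𝕂 := ℝ) K t).continuousAt
    have hc : Continuous (fun t : ℝ => ‖NormedSpace.exp (t • K) - 1‖) :=
      (hcont.sub continuous_const).norm
    have ht := (hc.tendsto 0).comp (tendsto_one_div_add_atTop_nhds_zero_nat (𝕜 := ℝ))
    simp only [zero_smul, NormedSpace.exp_zero, sub_self, norm_zero] at ht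
    exact (ht.eventually_lt_const hη).exists
  obtain ⟨k, hk⟩ := hsmall
  set g := NormedSpace.exp ((1 / ((k : ℝ) + 1)) • K) with hg
  have hgu : g ∈ Matrix.unitaryGroup (Fin n ⊕ Fin n) ℂ := hu _
  have hpow : ∀ j : ℕ, FixesFrame (conjMap (g ^ j) φ) := by
    intro j
    induction j with
    | zero =>
      have e : conjMap (g ^ 0) φ = φ := by funext P; simp [conjMap]
      rwa [e]
    | succ j ih =>
      rw [pow_succ, conjMap_mul]
      exact h _ (hφ.conjMap (pow_mem hgu j)) ih g hgu hk
  have e : g ^ (k + 1) = NormedSpace.exp K := by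
    rw [hg, ← Matrix.exp_nsmul, ← Nat.cast_smul_eq_nsmul ℝ, smul_smul]
    push_cast
    rw [mul_one_div_cancel (by positivity), one_smul]
  rw [← e]
  exact hpow _

/-- Every projection of normalized trace `1/2` is unitarily equivalent to `fstProj n`. -/
theorem IsHalfProj.exists_unitary_conj {Q : Matrix (Fin n ⊕ Fin n) (Fin n ⊕ Fin n) ℂ}
    (hQ : IsHalfProj Q) :
    ∃ w ∈ Matrix.unitaryGroup (Fin n ⊕ Fin n) ℂ, w * fstProj n * wᴴ = Q := by
  have hH : Q.IsHermitian := hQ.1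
  set U := (hH.eigenvectorUnitary : Matrix (Fin n ⊕ Fin n) (Fin n ⊕ Fin n) ℂ) with hU
  have hUm : U ∈ Matrix.unitaryGroup (Fin n ⊕ Fin n) ℂ := hH.eigenvectorUnitary.2
  have hU1 : U * Uᴴ = 1 := Matrix.mem_unitaryGroup_iff.mp hUm
  have hU2 : Uᴴ * U = 1 := Matrix.mem_unitaryGroup_iff'.mp hUm
  set d := hH.eigenvalues with hd
  have hspec : Uᴴ * Q * U = Matrix.diagonal (fun i => (d i : ℂ)) := by
    rw [mul_assoc, hU, hH.mul_eigenvectorUnitary, ← mul_assoc, ← hU, hU2, one_mul]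
  have hd01 : ∀ i, d i = 0 ∨ d i = 1 := by
    intro i
    have h : Matrix.diagonal (fun i => (d i : ℂ)) * Matrix.diagonal (fun i => (d i : ℂ)) =
        Matrix.diagonal (fun i => (d i : ℂ)) := by
      rw [← hspec]
      calc _ = Uᴴ * Q * (U * Uᴴ) * Q * U := by noncomm_ring
        _ = Uᴴ * (Q * Q) * U := by rw [hU1]; noncomm_ring
        _ = _ := by rw [hQ.2.1]
    have h' := congrFun (congrFun h i) i
    rw [Matrix.diagonal_mul_diagonal, Matrix.diagonal_apply_eq, Matrix.diagonal_apply_eq] at h'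
    have h'' : d i * d i = d i := by exact_mod_cast h'
    have : d i * (d i - 1) = 0 := by linarith
    rcases mul_eq_zero.mp this with h | h
    · exact Or.inl h
    · exact Or.inr (by linarith)
  have hcard : Fintype.card {i // d i = 1} = n := by
    have ht := hH.trace_eq_sum_eigenvalues
    rw [hQ.2.2] at ht
    have ht' : (n : ℝ) = ∑ i, d i := by simpa using congrArg Complex.re ht
    have hs : ∑ i, d i = ∑ i, if d i = 1 then (1 : ℝ) else 0 := by
      refine Finset.sum_congr rfl fun i _ => ?_
      rcases hd01 i with h | h <;> simp [h]
    rw [hs, Finset.sum_boole] at ht'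
    rw [Fintype.card_subtype]
    exact_mod_cast ht'.symm
  have hcard' : Fintype.card {i // ¬ d i = 1} = n := by
    rw [Fintype.card_subtype_compl, hcard]
    simp
  let σ : Fin n ⊕ Fin n ≃ Fin n ⊕ Fin n :=
    (Equiv.sumCongr (Fintype.equivFinOfCardEq hcard).symm
      (Fintype.equivFinOfCardEq hcard').symm).trans (Equiv.sumCompl (fun i => d i = 1))
  have hσ : Matrix.diagonal (fun i => (d (σ i) : ℂ)) = fstProj n := by
    have e : fstProj n = Matrix.diagonal (Sum.elim (fun _ => 1) (fun _ => 0)) := by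
      rw [← Matrix.fromBlocks_diagonal, Matrix.diagonal_one, Matrix.diagonal_zero, fstProj]
    rw [e]
    congr 1
    funext i
    rcases i with i | i
    · have : d (σ (Sum.inl i)) = 1 := ((Fintype.equivFinOfCardEq hcard).symm i).2
      simp [this]
    · have : ¬ d (σ (Sum.inr i)) = 1 := ((Fintype.equivFinOfCardEq hcard').symm i).2
      simp [(hd01 _).resolve_right this]
  refine ⟨U.submatrix id σ, ?_, ?_⟩
  · rw [Matrix.mem_unitaryGroup_iff', Matrix.star_eq_conjTranspose,
      Matrix.conjTranspose_submatrix, ← Matrix.submatrix_mul _ _ _ _ _ Function.bijective_id, hU2,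
      Matrix.submatrix_one_equiv]
  · have e : fstProj n = (Matrix.diagonal (fun i => (d i : ℂ))).submatrix σ σ := by
      rw [← hσ, Matrix.submatrix_diagonal_equiv]; rfl
    rw [e, Matrix.conjTranspose_submatrix, Matrix.submatrix_mul_equiv,
      Matrix.submatrix_mul_equiv, ← hspec]
    rw [Matrix.submatrix_id_id]
    calc _ = (U * Uᴴ) * Q * (U * Uᴴ) := by noncomm_ring
      _ = Q := by rw [hU1, one_mul, mul_one]

end HalfProjection

end Frobenius

section L2Operator

open scoped Matrix.Norms.L2Operator

theorem exists_phase_smul_unitary_eq_exp {m : Type*} [Fintype m] [DecidableEq m]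
    {w : Matrix m m ℂ} (hw : w ∈ Matrix.unitaryGroup m ℂ) :
    ∃ z : ℂ, star z * z = 1 ∧ ∃ K ∈ skewAdjoint (Matrix m m ℂ), z • w = NormedSpace.exp K := by
  obtain ⟨a, ha, haw⟩ : ∃ a : ℂ, ‖a‖ = 1 ∧ a ∉ spectrum ℂ w := by
    have hinf : (Metric.sphere (0 : ℂ) 1).Infinite := by
      refine (isConnected_sphere (by simp) (0 : ℂ) zero_le_one).isPreconnected.infinite_of_nontrivial
        ⟨1, by simp, -1, by simp, by norm_num⟩
    obtain ⟨a, h1, h2⟩ := hinf.exists_notMem_finset (Matrix.finite_spectrum w).toFinset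
    exact ⟨a, by simpa using h1, by simpa using h2⟩
  have ha0 : a ≠ 0 := by rintro rfl; simp at ha
  set z : ℂ := -a⁻¹ with hz
  have hzz : star z * z = 1 := by
    rw [RCLike.star_def, ← Complex.normSq_eq_conj_mul_self, Complex.normSq_eq_norm_sq, hz, norm_neg,
      norm_inv, ha]
    simp
  have hu : z • w ∈ unitary (Matrix m m ℂ) := by
    refine Matrix.mem_unitaryGroup_iff'.mpr ?_
    rw [star_smul, smul_mul_smul_comm, hzz, one_smul]
    exact Matrix.mem_unitaryGroup_iff'.mp hw
  have hspec : (-1 : ℂ) ∉ spectrum ℂ (z • w) := by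
    rw [spectrum.notMem_iff] at haw ⊢
    have e : algebraMap ℂ (Matrix m m ℂ) (-1) - z • w =
        Units.mk0 z (by simp [hz, ha0]) • (algebraMap ℂ (Matrix m m ℂ) a - w) := by
      rw [Units.smul_mk0, smul_sub, Algebra.algebraMap_eq_smul_one, Algebra.algebraMap_eq_smul_one,
        smul_smul, hz, neg_mul, inv_mul_cancel₀ ha0]
    rw [e]
    exact haw.smul _
  have hlt := (Unitary.norm_sub_one_lt_two_iff hu).mpr hspec
  have h := expUnitary_argSelfAdjoint (u := ⟨z • w, hu⟩) hlt
  refine ⟨z, hzz, Complex.I • (Unitary.argSelfAdjoint ⟨z • w, hu⟩ : Matrix m m ℂ), ?_, ?_⟩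
  · exact (Unitary.argSelfAdjoint ⟨z • w, hu⟩).2.smul_mem_skewAdjoint Complex.conj_I
  · have h' := congrArg Subtype.val h
    rw [selfAdjoint.expUnitary_coe] at h'
    exact h'.symm

end L2Operator

/-- A surjective `L^p`-isometry of the trace-`1/2` projections of
`M_{2n}(ℂ) = M₂(Mₙ(ℂ))` fixing `fromBlocks I 0 0 0` and all projections
`(1/2)·fromBlocks I V Vᴴ I` (`V` unitary) is the identity. -/
theorem stmt16 (n : ℕ) (hn : 1 ≤ n) (p : ℝ) (hp : 0 < p)
    (φ : Matrix (Fin n ⊕ Fin n) (Fin n ⊕ Fin n) ℂ →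
      Matrix (Fin n ⊕ Fin n) (Fin n ⊕ Fin n) ℂ)
    (hmem : ∀ P : Matrix (Fin n ⊕ Fin n) (Fin n ⊕ Fin n) ℂ,
      Pᴴ = P → P * P = P → P.trace = (n : ℂ) →
      (φ P)ᴴ = φ P ∧ φ P * φ P = φ P ∧ (φ P).trace = (n : ℂ))
    (hsurj : ∀ Q : Matrix (Fin n ⊕ Fin n) (Fin n ⊕ Fin n) ℂ,
      Qᴴ = Q → Q * Q = Q → Q.trace = (n : ℂ) →
      ∃ P : Matrix (Fin n ⊕ Fin n) (Fin n ⊕ Fin n) ℂ,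
        Pᴴ = P ∧ P * P = P ∧ P.trace = (n : ℂ) ∧ φ P = Q)
    (hiso : ∀ P Q : Matrix (Fin n ⊕ Fin n) (Fin n ⊕ Fin n) ℂ,
      Pᴴ = P → P * P = P → P.trace = (n : ℂ) →
      Qᴴ = Q → Q * Q = Q → Q.trace = (n : ℂ) →
      lpnorm p (φ P - φ Q) = lpnorm p (P - Q))
    (hfix : φ (Matrix.fromBlocks 1 0 0 0) = Matrix.fromBlocks 1 0 0 0)
    (hfixU : ∀ V ∈ Matrix.unitaryGroup (Fin n) ℂ,
      φ ((2 : ℂ)⁻¹ • Matrix.fromBlocks 1 V Vᴴ 1) =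
        (2 : ℂ)⁻¹ • Matrix.fromBlocks 1 V Vᴴ 1) :
    ∀ Q : Matrix (Fin n ⊕ Fin n) (Fin n ⊕ Fin n) ℂ,
      Qᴴ = Q → Q * Q = Q → Q.trace = (n : ℂ) → φ Q = Q := by
  intro Q hQ₁ hQ₂ hQ₃
  have hφ : IsLpIsometry p φ :=
    ⟨fun P hP => hmem P hP.1 hP.2.1 hP.2.2, fun P R hP hR =>
      hiso P R hP.1 hP.2.1 hP.2.2 hR.1 hR.2.1 hR.2.2⟩
  obtain ⟨w, hw, rfl⟩ := IsHalfProj.exists_unitary_conj ⟨hQ₁, hQ₂, hQ₃⟩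
  obtain ⟨z, hz, K, hK, hzw⟩ := exists_phase_smul_unitary_eq_exp hw
  have hu : z • w ∈ Matrix.unitaryGroup (Fin n ⊕ Fin n) ℂ := by
    rw [Matrix.mem_unitaryGroup_iff', star_smul, smul_mul_smul_comm, hz, one_smul]
    exact Matrix.mem_unitaryGroup_iff'.mp hw
  have h := (fixesFrame_conjMap_exp hn hp hφ ⟨hfix, hfixU⟩ hK).1
  rw [← hzw, conjMap_eq_self_iff hu] at h
  have e : z • w * fstProj n * (z • w)ᴴ = w * fstProj n * wᴴ := by
    rw [Matrix.conjTranspose_smul, smul_mul_assoc, smul_mul_smul_comm, mul_comm, hz, one_smul]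
  rwa [e] at h
end
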